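/- There exists a universal constant c > 0 such that for every n and every pair of increasing measurable functions f, g : R^n → [0,1], one has Cor(f,g) ≥ c · min( M_1(f,g) / √(log(e / M_1(f,g))), M_1(f,g)^2 / |M_2(f,g)| ), where M_1(f,g) = ⟨M_1(f), M_1(g)⟩ and M_2(f,g) = ⟨M_2(f), M_2(g)⟩_{HS} (the Hilbert–Schmidt inner product; the second term of the minimum being interpreted as +∞ when M_2(f,g) = 0). -/

import Mathlib

/-!
Let `P_ρ` be the Ornstein–Uhlenbeck operator with correlation `√ρ`, put `F = P_{1/2} f` and
`G = P_{1/2} g`, consider `Φ(ρ) = ∫ P_ρ F P_ρ G dγ` and let `Φ₁, Φ₂, Φ₃` be its successive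
derivatives. Gaussian integration by parts gives `Φ₁ = ∑ᵢ ∫ P_ρ ∂ᵢF P_ρ ∂ᵢG dγ`, and the formula
iterates. For increasing `f, g` one has `Φ₁ ≥ 0`, so `Cor(f,g) ≥ Φ(r) - Φ(0)` for every `r ≤ 1`,
while `Φ₁(0) = M₁(f,g) / 2` and `Φ₂(0) = M₂(f,g) / 4`.

The heart of the matter is a lower bound on `Φ₃` independent of the dimension:
`Φ₃(ρ) ≥ -64 (W + log (1 / W) Φ₁(ρ))` for `ρ ≤ 1/2` and any `W ∈ (0, 1]`. For a fixed outer
variable, the integrand of `Φ₃` is, up to scaling, a sum over `i` of Hilbert–Schmidt products of the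
second-moment matrices of the nonnegative functions `∂ᵢF`, `∂ᵢG` along a slice. The
Donsker–Varadhan principle with quadratic test functions bounds such a product from below by
entropies, and these are bounded by means and second moments with a logarithmic loss. The second
moments add up over `i` to at most `1` because `|∇F| ≤ 1` and `|∇G| ≤ 1`, which is Bessel's
inequality for the coordinate functions applied to the slices of `f` and `g`.

Taylor's formula turns this into
`r M₁ / 2 - r² |M₂| / 8 - 32 W r³ ≤ (1 + 32 r² log (1 / W)) Cor(f,g)` for smooth `f, g`, and
mollification extends it to measurable ones. The choice `W = M₁`,
`r = min (1 / (16 √(log (e / M₁)))) (M₁ / |M₂|)` finishes the proof.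
-/

open MeasureTheory ProbabilityTheory

noncomputable section

/-- The standard Gaussian measure on `ℝⁿ`. -/
def stdGaussian (n : ℕ) : Measure (Fin n → ℝ) := Measure.pi fun _ => gaussianReal 0 1

/-- `f` is increasing (monotone): nondecreasing in each coordinate when the other
coordinates are kept fixed. -/
def CoordMonotone (n : ℕ) (f : (Fin n → ℝ) → ℝ) : Prop :=
  ∀ (x : Fin n → ℝ) (i : Fin n) (s t : ℝ), s ≤ t →
    f (Function.update x i s) ≤ f (Function.update x i t)

/-- `M₁(f) = ∫ x f(x) dγ(x) ∈ ℝⁿ` (given here coordinatewise). -/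
def gM1 (n : ℕ) (f : (Fin n → ℝ) → ℝ) (i : Fin n) : ℝ :=
  ∫ x, x i * f x ∂stdGaussian n

/-- `M₂(f) = ∫ (x xᵀ - Iₙ) f(x) dγ(x) ∈ ℝⁿˣⁿ` (given here entrywise). -/
def gM2 (n : ℕ) (f : (Fin n → ℝ) → ℝ) (i j : Fin n) : ℝ :=
  ∫ x, (x i * x j - if i = j then (1 : ℝ) else 0) * f x ∂stdGaussian n

/-- `Cor(f,g) = ∫ fg dγ - (∫ f dγ)(∫ g dγ)`. -/
def gCor (n : ℕ) (f g : (Fin n → ℝ) → ℝ) : ℝ :=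
  (∫ x, f x * g x ∂stdGaussian n) -
    (∫ x, f x ∂stdGaussian n) * ∫ x, g x ∂stdGaussian n

/-- `M₁(f,g) = ⟨M₁(f), M₁(g)⟩`. -/
def gM1pair (n : ℕ) (f g : (Fin n → ℝ) → ℝ) : ℝ := ∑ i, gM1 n f i * gM1 n g i

/-- `M₂(f,g) = ⟨M₂(f), M₂(g)⟩_{HS}`. -/
def gM2pair (n : ℕ) (f g : (Fin n → ℝ) → ℝ) : ℝ := ∑ i, ∑ j, gM2 n f i j * gM2 n g i j

local notation "γ" => (_root_.stdGaussian)

variable {n : ℕ}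

/-! ### Density, moments and integration by parts -/

instance stdGaussian_isProbabilityMeasure (n : ℕ) : IsProbabilityMeasure (γ n) := by
  unfold _root_.stdGaussian; infer_instance

/-- The density of the standard Gaussian measure on `ℝⁿ` with respect to Lebesgue measure. -/
def gaussianDensity (n : ℕ) (x : Fin n → ℝ) : ℝ := ∏ i, gaussianPDFReal 0 1 (x i)

lemma gaussianDensity_nonneg (x : Fin n → ℝ) : 0 ≤ gaussianDensity n x :=
  Finset.prod_nonneg fun _ _ => gaussianPDFReal_nonneg _ _ _

lemma measurable_gaussianDensity : Measurable (gaussianDensity n) :=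
  Finset.measurable_prod _ fun i _ =>
    (measurable_gaussianPDFReal 0 1).comp (measurable_pi_apply i)

lemma indicator_univ_pi_gaussianDensity (s : Fin n → Set ℝ) (x : Fin n → ℝ) :
    (Set.univ.pi s).indicator (gaussianDensity n) x =
      ∏ i, (s i).indicator (gaussianPDFReal 0 1) (x i) := by
  by_cases hx : x ∈ Set.univ.pi s
  · rw [Set.indicator_of_mem hx, gaussianDensity]
    exact Finset.prod_congr rfl fun i _ => (Set.indicator_of_mem (hx i trivial) _).symm
  · obtain ⟨i, hi⟩ : ∃ i, x i ∉ s i := by simpa [Set.mem_pi] using hx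
    rw [Set.indicator_of_notMem hx,
      Finset.prod_eq_zero (Finset.mem_univ i) (Set.indicator_of_notMem hi _)]

lemma stdGaussian_eq_withDensity :
    γ n = volume.withDensity fun x => ENNReal.ofReal (gaussianDensity n x) := by
  refine Measure.pi_eq fun s hs => ?_
  have hnonneg (i : Fin n) (t : ℝ) : 0 ≤ (s i).indicator (gaussianPDFReal 0 1) t :=
    Set.indicator_nonneg (fun _ _ => gaussianPDFReal_nonneg _ _ _) _
  have hint (i : Fin n) : Integrable ((s i).indicator (gaussianPDFReal 0 1)) :=
    (integrable_gaussianPDFReal 0 1).indicator (hs i)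
  calc volume.withDensity (fun x => ENNReal.ofReal (gaussianDensity n x)) (Set.univ.pi s)
      = ∫⁻ x : Fin n → ℝ, ENNReal.ofReal (∏ i, (s i).indicator (gaussianPDFReal 0 1) (x i)) := by
        rw [withDensity_apply _ (.univ_pi hs), ← lintegral_indicator (.univ_pi hs)]
        simp_rw [← indicator_univ_pi_gaussianDensity]
        exact lintegral_congr fun x =>
          congrFun (Set.indicator_comp_of_zero (g := ENNReal.ofReal) ENNReal.ofReal_zero) x
    _ = ENNReal.ofReal (∫ x : Fin n → ℝ, ∏ i, (s i).indicator (gaussianPDFReal 0 1) (x i)) :=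
        (ofReal_integral_eq_lintegral_ofReal (Integrable.fintype_prod hint)
          (.of_forall fun x => Finset.prod_nonneg fun i _ => hnonneg i (x i))).symm
    _ = ∏ i, gaussianReal 0 1 (s i) := by
        rw [integral_fintype_prod_volume_eq_prod,
          ENNReal.ofReal_prod_of_nonneg fun i _ => integral_nonneg (hnonneg i)]
        simp_rw [gaussianReal_apply_eq_integral 0 one_ne_zero, integral_indicator (hs _)]

lemma stdGaussian_absolutelyContinuous : γ n ≪ volume := by
  rw [stdGaussian_eq_withDensity]; exact withDensity_absolutelyContinuous _ _

lemma integral_stdGaussian_eq (F : (Fin n → ℝ) → ℝ) :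
    ∫ x, F x ∂γ n = ∫ x, gaussianDensity n x * F x := by
  rw [stdGaussian_eq_withDensity, integral_withDensity_eq_integral_toReal_smul
    measurable_gaussianDensity.ennreal_ofReal (.of_forall fun _ => ENNReal.ofReal_lt_top)]
  simp only [ENNReal.toReal_ofReal (gaussianDensity_nonneg _), smul_eq_mul]

lemma integrable_stdGaussian_iff (F : (Fin n → ℝ) → ℝ) :
    Integrable F (γ n) ↔ Integrable fun x => gaussianDensity n x * F x := by
  rw [stdGaussian_eq_withDensity, integrable_withDensity_iff_integrable_smul'
    measurable_gaussianDensity.ennreal_ofReal (.of_forall fun _ => ENNReal.ofReal_lt_top)]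
  simp only [ENNReal.toReal_ofReal (gaussianDensity_nonneg _), smul_eq_mul]

lemma gaussianDensity_add_smul_single (x : Fin n → ℝ) (i : Fin n) (t : ℝ) :
    gaussianDensity n (x + t • Pi.single i 1) =
      gaussianDensity n x * Real.exp (-(t * x i) - t ^ 2 / 2) := by
  have hi : gaussianPDFReal 0 1 (x i + t) =
      gaussianPDFReal 0 1 (x i) * Real.exp (-(t * x i) - t ^ 2 / 2) := by
    simp only [gaussianPDFReal, mul_assoc, ← Real.exp_add, NNReal.coe_one]
    ring_nf
  have hne : ∀ j ∈ Finset.univ.erase i,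
      gaussianPDFReal 0 1 ((x + t • (Pi.single i 1 : Fin n → ℝ)) j) =
        gaussianPDFReal 0 1 (x j) := fun j hj => by
    simp [Finset.ne_of_mem_erase hj]
  simp only [gaussianDensity, ← Finset.mul_prod_erase _ _ (Finset.mem_univ i),
    Finset.prod_congr rfl hne]
  simp only [Pi.add_apply, Pi.smul_apply, Pi.single_eq_same, smul_eq_mul, mul_one, hi]
  ring

lemma hasLineDerivAt_gaussianDensity (x : Fin n → ℝ) (i : Fin n) :
    HasLineDerivAt ℝ (gaussianDensity n) (-(x i) * gaussianDensity n x) x (Pi.single i 1) := by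
  unfold HasLineDerivAt
  simp_rw [gaussianDensity_add_smul_single]
  have h := (((hasDerivAt_id' (0 : ℝ)).mul_const (x i)).fun_neg.fun_sub
    (((hasDerivAt_id' (0 : ℝ)).fun_pow 2).div_const 2)).exp.const_mul (gaussianDensity n x)
  refine h.congr_deriv ?_
  norm_num
  ring

lemma integral_coord_mul_eq_integral_lineDeriv (i : Fin n) {F F' : (Fin n → ℝ) → ℝ}
    (hd : ∀ x, HasLineDerivAt ℝ F (F' x) x (Pi.single i 1))
    (hF : Integrable F (γ n)) (hF' : Integrable F' (γ n))
    (hx : Integrable (fun x => x i * F x) (γ n)) :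
    ∫ x, x i * F x ∂γ n = ∫ x, F' x ∂γ n := by
  rw [integrable_stdGaussian_iff] at hF hF' hx
  have h := integral_bilinear_hasLineDerivAt_right_eq_neg_left_of_integrable
    (μ := (volume : Measure (Fin n → ℝ))) (f := gaussianDensity n)
    (f' := fun x => -(x i) * gaussianDensity n x) (g := F) (g' := F') (v := Pi.single i 1)
    (B := ContinuousLinearMap.mul ℝ ℝ)
    (hx.neg.congr (.of_forall fun x => by simp; ring)) hF' hF
    (fun x _ => hasLineDerivAt_gaussianDensity x i) (fun x _ => hd x)
  simp only [ContinuousLinearMap.mul_apply'] at h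
  rw [integral_stdGaussian_eq, integral_stdGaussian_eq, h, ← integral_neg]
  congr with x
  ring

lemma memLp_coord (i : Fin n) (p : NNReal) : MemLp (fun x : Fin n → ℝ => x i) p (γ n) :=
  (memLp_id_gaussianReal (μ := 0) (v := 1) p).comp_measurePreserving
    (measurePreserving_eval (fun _ : Fin n => gaussianReal 0 1) i)

lemma memLp_coord_mul_coord (i j : Fin n) : MemLp (fun x : Fin n → ℝ => x i * x j) 2 (γ n) := by
  have : ENNReal.HolderTriple (4 : NNReal) (4 : NNReal) 2 := ⟨by
    rw [← two_mul, ← ENNReal.toReal_eq_toReal_iff' (by finiteness) (by finiteness)]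
    norm_num⟩
  exact (memLp_coord j 4).mul' (memLp_coord i 4)

lemma integrable_coord (i : Fin n) : Integrable (fun x : Fin n → ℝ => x i) (γ n) :=
  memLp_one_iff_integrable.1 (memLp_coord i 1)

lemma integrable_coord_mul_coord (i j : Fin n) :
    Integrable (fun x : Fin n → ℝ => x i * x j) (γ n) :=
  (memLp_coord_mul_coord i j).integrable one_le_two

lemma hasLineDerivAt_coord (i j : Fin n) (x : Fin n → ℝ) :
    HasLineDerivAt ℝ (fun x : Fin n → ℝ => x j) (if i = j then 1 else 0) x (Pi.single i 1) := by
  have h := ((ContinuousLinearMap.proj (R := ℝ) (φ := fun _ : Fin n => ℝ) j).hasFDerivAt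
    (x := x)).hasLineDerivAt (Pi.single i 1)
  rwa [ContinuousLinearMap.proj_apply, Pi.single_apply, if_congr eq_comm rfl rfl] at h

lemma integral_coord_mul_coord (i j : Fin n) :
    ∫ x : Fin n → ℝ, x i * x j ∂γ n = if i = j then 1 else 0 := by
  rw [integral_coord_mul_eq_integral_lineDeriv i (hasLineDerivAt_coord i j) (integrable_coord j)
    (integrable_const _) (integrable_coord_mul_coord i j)]
  simp only [integral_const, probReal_univ, smul_eq_mul, one_mul]

section SquareIntegrable

variable {u : (Fin n → ℝ) → ℝ} (hu : MemLp u 2 (γ n))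
include hu

lemma integrable_coord_mul (i : Fin n) : Integrable (fun x => x i * u x) (γ n) :=
  MemLp.integrable_mul (p := 2) (memLp_coord i 2) hu

lemma integrable_coord_mul_coord_mul (i j : Fin n) :
    Integrable (fun x => x i * x j * u x) (γ n) :=
  (memLp_coord_mul_coord i j).integrable_mul hu

lemma gM2_eq_sub (i j : Fin n) :
    gM2 n u i j = ∫ x, x i * x j * u x ∂γ n - if i = j then ∫ x, u x ∂γ n else 0 := by
  have hint : Integrable (fun x => (if i = j then (1 : ℝ) else 0) * u x) (γ n) :=
    (hu.integrable one_le_two).const_mul _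
  simp only [gM2, sub_mul]
  rw [integral_sub (integrable_coord_mul_coord_mul hu i j) hint, integral_const_mul, ite_mul,
    one_mul, zero_mul]

/-- Bessel's inequality for the orthonormal system of the coordinate functions. -/
lemma sum_gM1_sq_le : ∑ i, gM1 n u i ^ 2 ≤ ∫ x, u x ^ 2 ∂γ n := by
  set L : (Fin n → ℝ) → ℝ := fun x => ∑ i, gM1 n u i * x i with hL
  have hL2 : MemLp L 2 (γ n) :=
    memLp_finsetSum _ fun i _ => (memLp_coord i 2).const_mul (gM1 n u i)
  have huL : ∫ x, u x * L x ∂γ n = ∑ i, gM1 n u i ^ 2 := by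
    have h (x : Fin n → ℝ) : u x * L x = ∑ i, gM1 n u i * (x i * u x) := by
      rw [hL, Finset.mul_sum]; exact Finset.sum_congr rfl fun i _ => by ring
    simp_rw [h]
    rw [integral_finsetSum _ fun i _ => (integrable_coord_mul hu i).const_mul _]
    simp_rw [integral_const_mul, sq]
    rfl
  have hLL : ∫ x, L x ^ 2 ∂γ n = ∑ i, gM1 n u i ^ 2 := by
    have h (x : Fin n → ℝ) : L x ^ 2 = ∑ i, ∑ j, gM1 n u i * gM1 n u j * (x i * x j) := by
      rw [hL, sq, Finset.sum_mul_sum]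
      exact Finset.sum_congr rfl fun i _ => Finset.sum_congr rfl fun j _ => by ring
    have hint (i j : Fin n) :
        Integrable (fun x : Fin n → ℝ => gM1 n u i * gM1 n u j * (x i * x j)) (γ n) :=
      (integrable_coord_mul_coord i j).const_mul _
    simp_rw [h]
    rw [integral_finsetSum _ fun i _ => integrable_finsetSum _ fun j _ => hint i j]
    simp_rw [integral_finsetSum _ fun j _ => hint _ j, integral_const_mul,
      integral_coord_mul_coord, mul_ite, mul_one, mul_zero,
      Finset.sum_ite_eq, Finset.mem_univ, if_true, sq]
  have hnonneg : 0 ≤ ∫ x, (u x - L x) ^ 2 ∂γ n := integral_nonneg fun x => sq_nonneg _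
  have hexpand (x : Fin n → ℝ) : (u x - L x) ^ 2 = u x ^ 2 - 2 * (u x * L x) + L x ^ 2 := by ring
  have huLi : Integrable (fun x => 2 * (u x * L x)) (γ n) := (hu.integrable_mul hL2).const_mul 2
  simp_rw [hexpand] at hnonneg
  rw [integral_add (f := fun x => u x ^ 2 - 2 * (u x * L x)) (hu.integrable_sq.sub huLi)
      hL2.integrable_sq,
    integral_sub hu.integrable_sq huLi, integral_const_mul, huL, hLL] at hnonneg
  linarith

end SquareIntegrable

/-! ### Entropy -/

section Entropy

variable {α : Type*} [MeasurableSpace α] {μ : Measure α} {u φ : α → ℝ}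

/-- The entropy `∫ u log u dμ - (∫ u dμ) log (∫ u dμ)` of a nonnegative function: for a probability
measure `μ` and `∫ u dμ = 1` this is the relative entropy of `u μ` with respect to `μ`. -/
def entropy (μ : Measure α) (u : α → ℝ) : ℝ :=
  (∫ x, u x * Real.log (u x) ∂μ) - (∫ x, u x ∂μ) * Real.log (∫ x, u x ∂μ)

lemma abs_mul_log_le_one_add_sq (t : ℝ) : |t * Real.log t| ≤ 1 + t ^ 2 := by
  rw [abs_mul, ← Real.log_abs, ← sq_abs t]
  rcases (abs_nonneg t).eq_or_lt with h0 | h0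
  · rw [← h0]; norm_num
  rcases le_total |t| 1 with h1 | h1
  · have h := Real.abs_log_mul_self_lt |t| h0 h1
    rw [abs_mul, abs_abs, mul_comm] at h
    nlinarith
  · rw [abs_of_nonneg (Real.log_nonneg h1)]
    nlinarith [Real.log_le_sub_one_of_pos h0]

lemma integrable_mul_log [IsFiniteMeasure μ] (hu : MemLp u 2 μ) :
    Integrable (fun x => u x * Real.log (u x)) μ :=
  ((integrable_const 1).add hu.integrable_sq).mono'
    (Real.continuous_mul_log.comp_aestronglyMeasurable hu.1)
    (.of_forall fun x => abs_mul_log_le_one_add_sq (u x))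

lemma entropy_eq_zero (h : u =ᵐ[μ] 0) : entropy μ u = 0 := by
  have hmul : ∫ x, u x * Real.log (u x) ∂μ = 0 :=
    integral_eq_zero_of_ae (h.mono fun x hx => by simp [hx])
  rw [entropy, hmul, integral_eq_zero_of_ae h, zero_mul, sub_zero]

/-- The inequality of the Legendre duality between `w ↦ w log w - w` and `exp`. -/
lemma mul_le_mul_log_sub_add_exp {w : ℝ} (hw : 0 ≤ w) (t : ℝ) :
    w * t ≤ w * Real.log w - w + Real.exp t := by
  rcases hw.eq_or_lt with rfl | hw
  · simpa using (Real.exp_pos t).le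
  · have h := Real.add_one_le_exp (t - Real.log w)
    rw [Real.exp_sub, Real.exp_log hw, le_div_iff₀ hw] at h
    linarith

/-- The Donsker–Varadhan variational bound. -/
lemma integral_mul_le_entropy_add (h0 : 0 ≤ᵐ[μ] u) (hu : Integrable u μ)
    (hul : Integrable (fun x => u x * Real.log (u x)) μ) (huφ : Integrable (fun x => u x * φ x) μ)
    (hφ : Integrable (fun x => Real.exp (φ x)) μ) :
    ∫ x, u x * φ x ∂μ ≤
      entropy μ u + (∫ x, u x ∂μ) * Real.log (∫ x, Real.exp (φ x) ∂μ) := by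
  rcases (integral_nonneg_of_ae h0).eq_or_lt with ha | ha
  · have hz : u =ᵐ[μ] 0 := (integral_eq_zero_iff_of_nonneg_ae h0 hu).1 ha.symm
    rw [entropy_eq_zero hz, ← ha, zero_mul, add_zero]
    exact (integral_eq_zero_of_ae (hz.mono fun x hx => by simp [hx])).le
  have : NeZero μ := ⟨by rintro rfl; simp at ha⟩
  have hZ : 0 < ∫ x, Real.exp (φ x) ∂μ := integral_exp_pos hφ
  rw [entropy]
  set a := ∫ x, u x ∂μ with ha_def
  set Z := ∫ x, Real.exp (φ x) ∂μ with hZ_def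
  -- Young's inequality at `t = φ - log Z + log a`, the exponent that makes `∫ e ^ t = ∫ u`.
  have hpoint : ∀ᵐ x ∂μ, u x * φ x ≤ u x * Real.log (u x) - u x
      + a / Z * Real.exp (φ x) + u x * (Real.log Z - Real.log a) := h0.mono fun x hx => by
    have h := mul_le_mul_log_sub_add_exp hx (φ x - Real.log Z + Real.log a)
    rw [Real.exp_add, Real.exp_sub, Real.exp_log hZ, Real.exp_log ha, div_mul_comm] at h
    linarith
  have hdiff : Integrable (fun x => u x * Real.log (u x) - u x) μ := hul.sub hu
  have hsum : Integrable (fun x => u x * Real.log (u x) - u x + a / Z * Real.exp (φ x)) μ :=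
    hdiff.add (hφ.const_mul _)
  have h := integral_mono_ae huφ (hsum.add (hu.mul_const _)) hpoint
  simp only [Pi.add_apply] at h
  rw [integral_add hsum (hu.mul_const _), integral_add hdiff (hφ.const_mul _), integral_sub hul hu,
    integral_const_mul, integral_mul_const, ← ha_def, ← hZ_def, div_mul_cancel₀ _ hZ.ne'] at h
  linarith

lemma mul_mul_log_le {a b w W : ℝ} (ha : 0 < a) (hb : 0 < b) (hw : 0 ≤ w) (hW : 0 < W) :
    b * (w * Real.log w) ≤
      W * w ^ 2 + (b * Real.log a + W * b ^ 2 / a - 2 * b * Real.log W) * w := by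
  rcases hw.eq_or_lt with rfl | hw
  · simp
  have h_w := Real.log_le_sub_one_of_pos (x := W * w / b) (by positivity)
  rw [Real.log_div (by positivity) hb.ne', Real.log_mul hW.ne' hw.ne'] at h_w
  have h_b := Real.log_le_sub_one_of_pos (x := W * b / a) (by positivity)
  rw [Real.log_div (by positivity) ha.ne', Real.log_mul hW.ne' hb.ne'] at h_b
  have hlog : Real.log w ≤ W * w / b + Real.log a + W * b / a - 2 * Real.log W := by linarith
  calc b * (w * Real.log w)
      ≤ b * (w * (W * w / b + Real.log a + W * b / a - 2 * Real.log W)) := by gcongr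
    _ = W * w ^ 2 + (b * Real.log a + W * b ^ 2 / a - 2 * b * Real.log W) * w := by
        field_simp
        ring

lemma mul_entropy_le [IsFiniteMeasure μ] (hu : MemLp u 2 μ) (h0 : 0 ≤ᵐ[μ] u) {b W : ℝ}
    (hb : 0 ≤ b) (hW : 0 < W) (hW1 : W ≤ 1) :
    b * entropy μ u ≤
      W * ((∫ x, u x ^ 2 ∂μ) + b ^ 2) + 2 * -Real.log W * ((∫ x, u x ∂μ) * b) := by
  have hl : 0 ≤ -Real.log W := neg_nonneg.2 (Real.log_nonpos hW.le hW1)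
  have ha0 : 0 ≤ ∫ x, u x ∂μ := integral_nonneg_of_ae h0
  have hui := hu.integrable one_le_two
  rcases hb.eq_or_lt with rfl | hb
  · rw [zero_mul]; positivity
  rcases ha0.eq_or_lt with ha | ha
  · rw [entropy_eq_zero ((integral_eq_zero_iff_of_nonneg_ae h0 hui).1 ha.symm), mul_zero]
    positivity
  have h := integral_mono_ae ((integrable_mul_log hu).const_mul b)
    ((hu.integrable_sq.const_mul W).add (hui.const_mul _))
    (h0.mono fun x hx => mul_mul_log_le ha hb hx hW)
  simp only [Pi.add_apply] at h
  rw [integral_add (hu.integrable_sq.const_mul W) (hui.const_mul _)] at h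
  simp only [integral_const_mul] at h
  rw [entropy, mul_sub]
  calc b * (∫ x, u x * Real.log (u x) ∂μ) - b * ((∫ x, u x ∂μ) * Real.log (∫ x, u x ∂μ))
      ≤ _ := sub_le_sub_right h _
    _ = _ := by field_simp; ring

lemma sq_integral_le_integral_sq [IsProbabilityMeasure μ] (hu : MemLp u 2 μ) :
    (∫ x, u x ∂μ) ^ 2 ≤ ∫ x, u x ^ 2 ∂μ := by
  have h := variance_nonneg u μ
  rw [variance_eq_sub hu] at h
  exact sub_nonneg.1 h

end Entropy

/-! ### Second-moment matrices and entropy -/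

lemma gaussianPDFReal_mul_exp_mul_sq (τ t : ℝ) :
    gaussianPDFReal 0 1 t * Real.exp (τ * t ^ 2 / 2) =
      (√(2 * Real.pi))⁻¹ * Real.exp (-((1 - τ) / 2) * t ^ 2) := by
  simp only [gaussianPDFReal, mul_assoc, ← Real.exp_add, NNReal.coe_one]
  ring_nf

lemma integrable_exp_mul_sq {τ : ℝ} (h : τ < 1) :
    Integrable (fun t : ℝ => Real.exp (τ * t ^ 2 / 2)) (gaussianReal 0 1) := by
  rw [gaussianReal_of_var_ne_zero _ one_ne_zero,
    integrable_withDensity_iff_integrable_smul' (measurable_gaussianPDF _ _)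
      (.of_forall fun _ => gaussianPDF_lt_top)]
  simp only [toReal_gaussianPDF, smul_eq_mul, gaussianPDFReal_mul_exp_mul_sq]
  exact (integrable_exp_neg_mul_sq (by linarith)).const_mul _

lemma integral_exp_mul_sq {τ : ℝ} (h : τ < 1) :
    ∫ t, Real.exp (τ * t ^ 2 / 2) ∂gaussianReal 0 1 = (√(1 - τ))⁻¹ := by
  have h1 : 0 < 1 - τ := sub_pos.2 h
  have hdiv : Real.pi / ((1 - τ) / 2) = 2 * Real.pi / (1 - τ) := by field_simp
  rw [integral_gaussianReal_eq_integral_smul one_ne_zero]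
  simp only [smul_eq_mul, gaussianPDFReal_mul_exp_mul_sq]
  rw [integral_const_mul, integral_gaussian, hdiv, Real.sqrt_div (by positivity)]
  field_simp

section SecondMoment

open Matrix

variable {u v : (Fin n → ℝ) → ℝ}

lemma isHermitian_gM2 (u : (Fin n → ℝ) → ℝ) : (Matrix.of (gM2 n u)).IsHermitian := by
  ext i j
  simp only [conjTranspose_apply, of_apply, star_trivial, gM2, mul_comm, eq_comm]

lemma dotProduct_sq_mul_eq_sum (w x : Fin n → ℝ) (c : ℝ) :
    (w ⬝ᵥ x) ^ 2 * c = ∑ i, ∑ j, w i * w j * (x i * x j * c) := by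
  rw [dotProduct, sq, Finset.sum_mul_sum, Finset.sum_mul]
  simp_rw [Finset.sum_mul]
  exact Finset.sum_congr rfl fun i _ => Finset.sum_congr rfl fun j _ => by ring

lemma integrable_dotProduct_sq_mul (hu : MemLp u 2 (γ n)) (w : Fin n → ℝ) :
    Integrable (fun x => (w ⬝ᵥ x) ^ 2 * u x) (γ n) := by
  simp_rw [dotProduct_sq_mul_eq_sum]
  exact integrable_finsetSum _ fun i _ => integrable_finsetSum _ fun j _ =>
    (integrable_coord_mul_coord_mul hu i j).const_mul _

lemma integral_dotProduct_sq_mul (hu : MemLp u 2 (γ n)) (w : Fin n → ℝ) :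
    ∫ x, (w ⬝ᵥ x) ^ 2 * u x ∂γ n =
      w ⬝ᵥ Matrix.of (gM2 n u) *ᵥ w + (w ⬝ᵥ w) * ∫ x, u x ∂γ n := by
  have hint (i j : Fin n) : Integrable (fun x => w i * w j * (x i * x j * u x)) (γ n) :=
    (integrable_coord_mul_coord_mul hu i j).const_mul _
  have hmoment (i j : Fin n) : ∫ x, x i * x j * u x ∂γ n =
      gM2 n u i j + if i = j then ∫ x, u x ∂γ n else 0 := by
    rw [gM2_eq_sub hu, sub_add_cancel]
  simp_rw [dotProduct_sq_mul_eq_sum]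
  rw [integral_finsetSum _ fun i _ => integrable_finsetSum _ fun j _ => hint i j]
  simp_rw [integral_finsetSum _ fun j _ => hint _ j, integral_const_mul, hmoment, mul_add,
    Finset.sum_add_distrib, mul_ite, mul_zero, Finset.sum_ite_eq, Finset.mem_univ, if_true,
    ← Finset.sum_mul]
  congr 1
  simp only [dotProduct, mulVec, of_apply, Finset.mul_sum]
  exact Finset.sum_congr rfl fun i _ => Finset.sum_congr rfl fun j _ => by ring

lemma sum_mul_eq_sum_eigenvalues_mul {A : Matrix (Fin n) (Fin n) ℝ} (hA : A.IsHermitian)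
    (B : Matrix (Fin n) (Fin n) ℝ) :
    ∑ i, ∑ j, B i j * A i j = ∑ k, hA.eigenvalues k *
      ((hA.eigenvectorBasis k).ofLp ⬝ᵥ B *ᵥ (hA.eigenvectorBasis k).ofLp) := by
  have hentry (i j : Fin n) : A i j = ∑ k, hA.eigenvalues k *
      (hA.eigenvectorBasis k i * hA.eigenvectorBasis k j) := by
    conv_lhs => rw [hA.spectral_theorem]
    rw [Unitary.conjStarAlgAut_apply, mul_apply]
    refine Finset.sum_congr rfl fun k _ => ?_
    rw [mul_diagonal, star_apply, IsHermitian.eigenvectorUnitary_apply,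
      IsHermitian.eigenvectorUnitary_apply, star_trivial, Function.comp_apply,
      RCLike.ofReal_real_eq_id, id]
    ring
  calc ∑ i, ∑ j, B i j * A i j
      = ∑ i, ∑ k, ∑ j, hA.eigenvalues k *
          (hA.eigenvectorBasis k i * (B i j * hA.eigenvectorBasis k j)) := by
        refine Finset.sum_congr rfl fun i _ => ?_
        rw [Finset.sum_comm]
        refine Finset.sum_congr rfl fun j _ => ?_
        rw [hentry, Finset.mul_sum]
        exact Finset.sum_congr rfl fun k _ => by ring
    _ = _ := by
        rw [Finset.sum_comm]
        simp only [dotProduct, mulVec, Finset.mul_sum]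

section Basis

variable (e : OrthonormalBasis (Fin n) ℝ (EuclideanSpace ℝ (Fin n)))

lemma dotProduct_self_orthonormalBasis (k : Fin n) : (e k).ofLp ⬝ᵥ (e k).ofLp = 1 := by
  have h := real_inner_self_eq_norm_sq (e k)
  rw [e.norm_eq_one, one_pow, EuclideanSpace.inner_eq_star_dotProduct] at h
  exact h

lemma measurePreserving_orthonormalBasis_dotProduct :
    MeasurePreserving (fun x k => (e k).ofLp ⬝ᵥ x) (γ n) (γ n) := by
  have hto : MeasurePreserving (MeasurableEquiv.toLp 2 (Fin n → ℝ)) (γ n)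
      (ProbabilityTheory.stdGaussian (EuclideanSpace ℝ (Fin n))) :=
    ⟨(MeasurableEquiv.toLp 2 _).measurable, map_pi_eq_stdGaussian⟩
  have hrepr : MeasurePreserving e.repr
      (ProbabilityTheory.stdGaussian (EuclideanSpace ℝ (Fin n)))
      (ProbabilityTheory.stdGaussian (EuclideanSpace ℝ (Fin n))) :=
    ⟨e.repr.continuous.measurable, ProbabilityTheory.stdGaussian_map e.repr⟩
  convert (hto.symm _).comp (hrepr.comp hto) using 1
  ext x k
  have h : (e k).ofLp ⬝ᵥ x = e.repr (WithLp.toLp 2 x) k := by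
    rw [e.repr_apply_apply, EuclideanSpace.inner_eq_star_dotProduct, dotProduct_comm]
    rfl
  exact h

variable {τ : Fin n → ℝ} (hτ : ∀ k, τ k < 1)
include hτ

lemma integrable_exp_sum_mul_dotProduct_sq :
    Integrable (fun x => Real.exp (∑ k, τ k * ((e k).ofLp ⬝ᵥ x) ^ 2 / 2)) (γ n) := by
  refine (measurePreserving_orthonormalBasis_dotProduct e).integrable_comp_of_integrable
    (g := fun y => Real.exp (∑ k, τ k * y k ^ 2 / 2)) ?_
  simp_rw [Real.exp_sum]
  exact Integrable.fintype_prod fun k => integrable_exp_mul_sq (hτ k)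

lemma integral_exp_sum_mul_dotProduct_sq :
    ∫ x, Real.exp (∑ k, τ k * ((e k).ofLp ⬝ᵥ x) ^ 2 / 2) ∂γ n = ∏ k, (√(1 - τ k))⁻¹ := by
  have hrot := measurePreserving_orthonormalBasis_dotProduct e
  have hcont : Continuous fun y : Fin n → ℝ => Real.exp (∑ k, τ k * y k ^ 2 / 2) := by fun_prop
  have h : ∫ y : Fin n → ℝ, Real.exp (∑ k, τ k * y k ^ 2 / 2) ∂γ n =
      ∫ x, Real.exp (∑ k, τ k * ((e k).ofLp ⬝ᵥ x) ^ 2 / 2) ∂γ n := by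
    rw [← integral_map hrot.aemeasurable hcont.aestronglyMeasurable, hrot.map_eq]
  rw [← h]
  simp_rw [Real.exp_sum]
  exact (integral_fintype_prod_eq_prod (𝕜 := ℝ) fun k (t : ℝ) => Real.exp (τ k * t ^ 2 / 2)).trans
    (Finset.prod_congr rfl fun k _ => integral_exp_mul_sq (hτ k))

lemma log_integral_exp_sum_mul_dotProduct_sq :
    Real.log (∫ x, Real.exp (∑ k, τ k * ((e k).ofLp ⬝ᵥ x) ^ 2 / 2) ∂γ n) =
      -(∑ k, Real.log (1 - τ k)) / 2 := by
  have hpos (k : Fin n) : 0 < 1 - τ k := sub_pos.2 (hτ k)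
  rw [integral_exp_sum_mul_dotProduct_sq e hτ,
    Real.log_prod fun k _ => (inv_pos.2 (Real.sqrt_pos.2 (hpos k))).ne', ← Finset.sum_neg_distrib,
    Finset.sum_div]
  refine Finset.sum_congr rfl fun k _ => ?_
  rw [Real.log_inv, Real.log_sqrt (hpos k).le, neg_div]

lemma sum_mul_integral_dotProduct_sq_mul_le (hu : MemLp u 2 (γ n)) (h0 : 0 ≤ᵐ[γ n] u) :
    ∑ k, τ k * ∫ x, ((e k).ofLp ⬝ᵥ x) ^ 2 * u x ∂γ n ≤
      2 * entropy (γ n) u - (∫ x, u x ∂γ n) * ∑ k, Real.log (1 - τ k) := by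
  have hmul (x : Fin n → ℝ) : u x * ∑ k, τ k * ((e k).ofLp ⬝ᵥ x) ^ 2 / 2 =
      ∑ k, τ k / 2 * (((e k).ofLp ⬝ᵥ x) ^ 2 * u x) := by
    rw [Finset.mul_sum]; exact Finset.sum_congr rfl fun k _ => by ring
  have hint (k : Fin n) : Integrable (fun x => τ k / 2 * (((e k).ofLp ⬝ᵥ x) ^ 2 * u x)) (γ n) :=
    (integrable_dotProduct_sq_mul hu _).const_mul _
  have h := integral_mul_le_entropy_add (φ := fun x => ∑ k, τ k * ((e k).ofLp ⬝ᵥ x) ^ 2 / 2) h0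
    (hu.integrable one_le_two) (integrable_mul_log hu)
    (by simp_rw [hmul]; exact integrable_finsetSum _ fun k _ => hint k)
    (integrable_exp_sum_mul_dotProduct_sq e hτ)
  rw [log_integral_exp_sum_mul_dotProduct_sq e hτ] at h
  simp_rw [hmul] at h
  rw [integral_finsetSum _ fun k _ => hint k] at h
  simp_rw [integral_const_mul, div_mul_eq_mul_div] at h
  rw [← Finset.sum_div] at h
  linarith

end Basis

lemma gM2_eq_zero (h : u =ᵐ[γ n] 0) (i j : Fin n) : gM2 n u i j = 0 :=
  integral_eq_zero_of_ae (h.mono fun x hx => by simp [hx])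

lemma gM2pair_eq_sum_eigenvalues_mul (hu : MemLp u 2 (γ n)) (v : (Fin n → ℝ) → ℝ) :
    gM2pair n u v = ∑ k, (isHermitian_gM2 v).eigenvalues k *
      (∫ x, (((isHermitian_gM2 v).eigenvectorBasis k).ofLp ⬝ᵥ x) ^ 2 * u x ∂γ n -
        ∫ x, u x ∂γ n) := by
  refine (sum_mul_eq_sum_eigenvalues_mul (isHermitian_gM2 v) (Matrix.of (gM2 n u))).trans
    (Finset.sum_congr rfl fun k _ => ?_)
  rw [integral_dotProduct_sq_mul hu, dotProduct_self_orthonormalBasis, one_mul,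
    add_sub_cancel_right]

lemma integral_eigenvectorBasis_dotProduct_sq_mul (hv : MemLp v 2 (γ n)) (k : Fin n) :
    ∫ x, (((isHermitian_gM2 v).eigenvectorBasis k).ofLp ⬝ᵥ x) ^ 2 * v x ∂γ n =
      (isHermitian_gM2 v).eigenvalues k + ∫ x, v x ∂γ n := by
  rw [integral_dotProduct_sq_mul hv, dotProduct_self_orthonormalBasis, one_mul,
    (isHermitian_gM2 v).eigenvalues_eq k]
  rfl

/-- The variational bound for the log-density of the centred Gaussian whose variances are
`1 + β k / 2`, halfway between those of `γ` and of `v`. -/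
lemma integral_mul_sum_sub_log_le_entropy
    (e : OrthonormalBasis (Fin n) ℝ (EuclideanSpace ℝ (Fin n))) {β : Fin n → ℝ}
    (hβ : ∀ k, -1 ≤ β k) (hv : MemLp v 2 (γ n)) (hv0 : 0 ≤ᵐ[γ n] v)
    (hmoment : ∀ k, ∫ x, ((e k).ofLp ⬝ᵥ x) ^ 2 * v x ∂γ n = (∫ x, v x ∂γ n) * (1 + β k)) :
    (∫ x, v x ∂γ n) * ∑ k, (β k / 2 - Real.log (1 + β k / 2)) ≤ 2 * entropy (γ n) v := by
  have h := sum_mul_integral_dotProduct_sq_mul_le e (τ := fun k => β k / 2 / (1 + β k / 2))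
    (fun k => by rw [div_lt_one] <;> linarith [hβ k]) hv hv0
  have hb : 0 ≤ ∫ x, v x ∂γ n := integral_nonneg_of_ae hv0
  have hlog (k : Fin n) :
      Real.log (1 - β k / 2 / (1 + β k / 2)) = -Real.log (1 + β k / 2) := by
    rw [one_sub_div (by linarith [hβ k]), add_sub_cancel_right, one_div, Real.log_inv]
  have hquadratic : (∫ x, v x ∂γ n) * ∑ k, β k / 2 ≤
      ∑ k, β k / 2 / (1 + β k / 2) * ((∫ x, v x ∂γ n) * (1 + β k)) := by
    rw [Finset.mul_sum]
    refine Finset.sum_le_sum fun k _ => ?_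
    have hpos : 0 < 2 + β k := by linarith [hβ k]
    have hgap : β k / 2 / (1 + β k / 2) * ((∫ x, v x ∂γ n) * (1 + β k)) -
        (∫ x, v x ∂γ n) * (β k / 2) = (∫ x, v x ∂γ n) * β k ^ 2 / (2 * (2 + β k)) := by
      rw [show 1 + β k / 2 = (2 + β k) / 2 by ring]
      field_simp
      ring
    rw [← sub_nonneg, hgap]
    positivity
  simp_rw [hmoment, hlog, Finset.sum_neg_distrib] at h
  rw [Finset.sum_sub_distrib]
  linarith

/-- Diagonalise the matrix of `v`, with eigenvalues `(∫ v) β k` where `β k ≥ -1`. The variational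
bound for `u`, tested on minus a quarter of the quadratic form of that matrix, bounds minus a
quarter of the pairing by the entropy of `u` plus a multiple of `∑ (β k / 2 - log (1 + β k / 2))`,
and the entropy of `v` dominates this sum. -/
lemma neg_mul_entropy_add_le_gM2pair (hu : MemLp u 2 (γ n)) (hu0 : 0 ≤ᵐ[γ n] u)
    (hv : MemLp v 2 (γ n)) (hv0 : 0 ≤ᵐ[γ n] v) :
    -4 * ((∫ x, v x ∂γ n) * entropy (γ n) u + (∫ x, u x ∂γ n) * entropy (γ n) v) ≤
      gM2pair n u v := by
  have ha : 0 ≤ ∫ x, u x ∂γ n := integral_nonneg_of_ae hu0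
  rcases (integral_nonneg_of_ae hv0).eq_or_lt with hb | hb
  · have hz := (integral_eq_zero_iff_of_nonneg_ae hv0 (hv.integrable one_le_two)).1 hb.symm
    simp [gM2pair, gM2_eq_zero hz, entropy_eq_zero hz, ← hb]
  set e := (isHermitian_gM2 v).eigenvectorBasis
  obtain ⟨β, hβ⟩ : ∃ β : Fin n → ℝ,
      ∀ k, (isHermitian_gM2 v).eigenvalues k = (∫ x, v x ∂γ n) * β k :=
    ⟨fun k => _ / _, fun k => (mul_div_cancel₀ _ hb.ne').symm⟩
  have hmoment (k : Fin n) :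
      ∫ x, ((e k).ofLp ⬝ᵥ x) ^ 2 * v x ∂γ n = (∫ x, v x ∂γ n) * (1 + β k) := by
    rw [integral_eigenvectorBasis_dotProduct_sq_mul hv, hβ, mul_add, mul_one, add_comm]
  have hβ1 (k : Fin n) : -1 ≤ β k := by
    have h : 0 ≤ ∫ x, ((e k).ofLp ⬝ᵥ x) ^ 2 * v x ∂γ n :=
      integral_nonneg_of_ae (hv0.mono fun x hx => mul_nonneg (sq_nonneg _) hx)
    rw [hmoment] at h
    linarith [nonneg_of_mul_nonneg_right h hb]
  have h_u := sum_mul_integral_dotProduct_sq_mul_le e (τ := fun k => -(β k / 2))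
    (fun k => by linarith [hβ1 k]) hu hu0
  have h_v := integral_mul_sum_sub_log_le_entropy e hβ1 hv hv0 hmoment
  have hpair : gM2pair n u v = (∫ x, v x ∂γ n) * (-2 * ∑ k, -(β k / 2) *
      ∫ x, ((e k).ofLp ⬝ᵥ x) ^ 2 * u x ∂γ n - 2 * (∫ x, u x ∂γ n) * ∑ k, β k / 2) := by
    rw [gM2pair_eq_sum_eigenvalues_mul hu v]
    simp_rw [hβ, Finset.mul_sum, ← Finset.sum_sub_distrib, Finset.mul_sum]
    exact Finset.sum_congr rfl fun k _ => by ring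
  simp_rw [sub_neg_eq_add] at h_u
  rw [Finset.sum_sub_distrib] at h_v
  rw [hpair]
  linarith [mul_le_mul_of_nonneg_left h_u hb.le, mul_le_mul_of_nonneg_left h_v ha]

lemma neg_mul_add_log_mul_le_gM2pair (hu : MemLp u 2 (γ n)) (hu0 : 0 ≤ᵐ[γ n] u)
    (hv : MemLp v 2 (γ n)) (hv0 : 0 ≤ᵐ[γ n] v) {W : ℝ} (hW : 0 < W) (hW1 : W ≤ 1) :
    -8 * (W * ((∫ x, u x ^ 2 ∂γ n) + ∫ x, v x ^ 2 ∂γ n) +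
      2 * -Real.log W * ((∫ x, u x ∂γ n) * ∫ x, v x ∂γ n)) ≤ gM2pair n u v := by
  have h := neg_mul_entropy_add_le_gM2pair hu hu0 hv hv0
  have hEu := mul_entropy_le hu hu0 (integral_nonneg_of_ae hv0) hW hW1
  have hEv := mul_entropy_le hv hv0 (integral_nonneg_of_ae hu0) hW hW1
  have hJu := mul_le_mul_of_nonneg_left (sq_integral_le_integral_sq hu) hW.le
  have hJv := mul_le_mul_of_nonneg_left (sq_integral_le_integral_sq hv) hW.le
  linarith

end SecondMoment

/-! ### Functions with bounded derivatives -/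

/-- The partial derivative of `u` in the direction of the `i`-th coordinate. -/
def partialDeriv (i : Fin n) (u : (Fin n → ℝ) → ℝ) (x : Fin n → ℝ) : ℝ :=
  fderiv ℝ u x (Pi.single i 1)

/-- `u` has continuous and bounded iterated partial derivatives up to order `k`. The recursion
along partial derivatives, rather than Fréchet derivatives, makes the class fit integration by
parts. -/
def BddDiff : ℕ → ((Fin n → ℝ) → ℝ) → Prop
  | 0, u => Continuous u ∧ ∃ C, ∀ x, |u x| ≤ C
  | k + 1, u => Differentiable ℝ u ∧ (∃ C, ∀ x, |u x| ≤ C) ∧ ∀ i, BddDiff k (partialDeriv i u)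

lemma fderiv_eq_sum_partialDeriv (u : (Fin n → ℝ) → ℝ) (x w : Fin n → ℝ) :
    fderiv ℝ u x w = ∑ i, w i * partialDeriv i u x := by
  calc fderiv ℝ u x w = fderiv ℝ u x (∑ i, w i • Pi.single i 1) := by
        simp only [← Pi.single_smul, smul_eq_mul, mul_one, Finset.univ_sum_single]
    _ = ∑ i, w i * partialDeriv i u x := by
        simp only [map_sum, map_smul, smul_eq_mul, partialDeriv]

lemma fderiv_eq_sum_smul_proj (u : (Fin n → ℝ) → ℝ) :
    fderiv ℝ u = fun x => ∑ i, partialDeriv i u x •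
      ContinuousLinearMap.proj (R := ℝ) (φ := fun _ : Fin n => ℝ) i := by
  ext x w
  simp [fderiv_eq_sum_partialDeriv, mul_comm]

lemma hasLineDerivAt_partialDeriv {u : (Fin n → ℝ) → ℝ} (hu : Differentiable ℝ u) (i : Fin n)
    (x : Fin n → ℝ) : HasLineDerivAt ℝ u (partialDeriv i u x) x (Pi.single i 1) :=
  (hu x).hasFDerivAt.hasLineDerivAt _

lemma partialDeriv_const_mul {u : (Fin n → ℝ) → ℝ} (hu : Differentiable ℝ u) (i : Fin n) (c : ℝ) :
    partialDeriv i (fun x => c * u x) = fun x => c * partialDeriv i u x := by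
  funext x
  simp only [partialDeriv, fderiv_const_mul (hu x), _root_.smul_apply, smul_eq_mul]

lemma partialDeriv_comp_add_smul {u : (Fin n → ℝ) → ℝ} (hu : Differentiable ℝ u) (i : Fin n)
    (w : Fin n → ℝ) (c : ℝ) :
    partialDeriv i (fun x => u (w + c • x)) = fun x => c * partialDeriv i u (w + c • x) := by
  funext x
  have haff : HasFDerivAt (fun x : Fin n → ℝ => w + c • x) (c • .id ℝ (Fin n → ℝ)) x :=
    ((hasFDerivAt_id x).const_smul c).const_add w
  have hcomp := ((hu (w + c • x)).hasFDerivAt.comp x haff).fderiv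
  simp only [Function.comp_def] at hcomp
  simp [partialDeriv, hcomp]

namespace BddDiff

variable {u : (Fin n → ℝ) → ℝ} {k : ℕ}

lemma continuous (h : BddDiff k u) : Continuous u := by
  cases k with
  | zero => exact h.1
  | succ k => exact h.1.continuous

lemma exists_bound (h : BddDiff k u) : ∃ C, ∀ x, |u x| ≤ C := by
  cases k with
  | zero => exact h.2
  | succ k => exact h.2.1

lemma differentiable (h : BddDiff (k + 1) u) : Differentiable ℝ u := h.1

lemma partialDeriv (h : BddDiff (k + 1) u) (i : Fin n) : BddDiff k (partialDeriv i u) := h.2.2 i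

lemma memLp (h : BddDiff k u) : MemLp u 2 (γ n) := by
  obtain ⟨C, hC⟩ := h.exists_bound
  exact .of_bound h.continuous.aestronglyMeasurable C (.of_forall hC)

lemma integrable (h : BddDiff k u) : Integrable u (γ n) := h.memLp.integrable one_le_two

lemma const_mul (h : BddDiff k u) (c : ℝ) : BddDiff k fun x => c * u x := by
  have hbound {u : (Fin n → ℝ) → ℝ} (h : ∃ C, ∀ x, |u x| ≤ C) : ∃ C, ∀ x, |c * u x| ≤ C := by
    obtain ⟨C, hC⟩ := h
    exact ⟨|c| * C, fun x => by rw [abs_mul]; gcongr; exact hC x⟩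
  induction k generalizing u with
  | zero => exact ⟨h.1.const_mul c, hbound h.2⟩
  | succ k ih =>
    refine ⟨h.1.const_mul c, hbound h.2.1, fun i => ?_⟩
    rw [partialDeriv_const_mul h.1]
    exact ih (h.2.2 i)

lemma comp_add_smul (h : BddDiff k u) (w : Fin n → ℝ) (c : ℝ) :
    BddDiff k fun x => u (w + c • x) := by
  have hbound {u : (Fin n → ℝ) → ℝ} (h : ∃ C, ∀ x, |u x| ≤ C) :
      ∃ C, ∀ x, |u (w + c • x)| ≤ C := h.imp fun C hC x => hC _
  induction k generalizing u with
  | zero => exact ⟨h.1.comp (by fun_prop), hbound h.2⟩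
  | succ k ih =>
    refine ⟨h.1.comp (by fun_prop), hbound h.2.1, fun i => ?_⟩
    rw [partialDeriv_comp_add_smul h.1]
    exact (ih (h.2.2 i)).const_mul c

lemma continuous_fderiv (h : BddDiff (k + 1) u) : Continuous (fderiv ℝ u) := by
  rw [fderiv_eq_sum_smul_proj]
  exact continuous_finsetSum _ fun i _ => (h.partialDeriv i).continuous.smul continuous_const

lemma exists_bound_fderiv (h : BddDiff (k + 1) u) : ∃ C, ∀ x, ‖fderiv ℝ u x‖ ≤ C := by
  choose C hC using fun i => (h.partialDeriv i).exists_bound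
  refine ⟨∑ i, C i * ‖ContinuousLinearMap.proj (R := ℝ) (φ := fun _ : Fin n => ℝ) i‖, fun x => ?_⟩
  rw [fderiv_eq_sum_smul_proj]
  refine (norm_sum_le _ _).trans (Finset.sum_le_sum fun i _ => ?_)
  rw [norm_smul]
  gcongr
  exact hC i x

lemma gM1_eq (h : BddDiff (k + 1) u) (i : Fin n) :
    gM1 n u i = ∫ x, _root_.partialDeriv i u x ∂γ n :=
  integral_coord_mul_eq_integral_lineDeriv i (hasLineDerivAt_partialDeriv h.differentiable i)
    h.integrable (h.partialDeriv i).integrable (integrable_coord_mul h.memLp i)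

lemma gM2_eq (h : BddDiff (k + 2) u) (i j : Fin n) :
    gM2 n u i j = ∫ x, _root_.partialDeriv j (_root_.partialDeriv i u) x ∂γ n := by
  have hint₀ : Integrable (fun x => (if i = j then 1 else 0) * u x) (γ n) :=
    h.integrable.const_mul _
  have hint₁ := integrable_coord_mul (h.partialDeriv i).memLp j
  have hint₂ : Integrable (fun x => x i * (x j * u x)) (γ n) := by
    simpa only [mul_assoc] using integrable_coord_mul_coord_mul h.memLp i j
  have hibp := integral_coord_mul_eq_integral_lineDeriv i (F := fun x => x j * u x)
    (fun x => HasDerivAt.mul (hasLineDerivAt_coord i j x)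
      (hasLineDerivAt_partialDeriv h.differentiable i x))
    (integrable_coord_mul h.memLp j)
    (by simp only [zero_smul, add_zero]; exact hint₀.add hint₁) hint₂
  simp only [zero_smul, add_zero] at hibp
  simp only [gM2, sub_mul, mul_assoc]
  rw [integral_sub hint₂ hint₀, hibp, integral_add hint₀ hint₁, add_sub_cancel_left]
  exact (h.partialDeriv i).gM1_eq j

end BddDiff

/-! ### The Ornstein–Uhlenbeck semigroup -/

/-- The point `√ρ z + √(1 - ρ) x` of Mehler's formula. -/
def mehlerPoint (ρ : ℝ) (z x : Fin n → ℝ) : Fin n → ℝ := √ρ • z + √(1 - ρ) • x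

/-- The Ornstein–Uhlenbeck operator `P_ρ`, which averages over Gaussian noise correlated by `√ρ`;
in terms of the semigroup time `t`, the parameter is `ρ = exp (-2 t)`. -/
def ouOperator (ρ : ℝ) (u : (Fin n → ℝ) → ℝ) (z : Fin n → ℝ) : ℝ :=
  ∫ x, u (mehlerPoint ρ z x) ∂γ n

lemma continuous_mehlerPoint :
    Continuous fun p : ℝ × (Fin n → ℝ) × (Fin n → ℝ) => mehlerPoint p.1 p.2.1 p.2.2 := by
  unfold mehlerPoint; fun_prop

lemma measurePreserving_sqrt_mul_add_sqrt_mul {ρ : ℝ} (h0 : 0 ≤ ρ) (h1 : ρ ≤ 1) :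
    MeasurePreserving (fun p : ℝ × ℝ => √ρ * p.1 + √(1 - ρ) * p.2)
      ((gaussianReal 0 1).prod (gaussianReal 0 1)) (gaussianReal 0 1) := by
  refine ⟨by fun_prop, ?_⟩
  have hsplit : (fun p : ℝ × ℝ => √ρ * p.1 + √(1 - ρ) * p.2) =
      (fun p => p.1 + p.2) ∘ Prod.map (√ρ * ·) (√(1 - ρ) * ·) := rfl
  rw [hsplit, ← Measure.map_map (by fun_prop) (by fun_prop),
    ← Measure.map_prod_map _ _ (by fun_prop) (by fun_prop), gaussianReal_map_const_mul,
    gaussianReal_map_const_mul]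
  refine (gaussianReal_conv_gaussianReal (m₁ := √ρ * 0) (m₂ := √(1 - ρ) * 0)).trans ?_
  congr 1
  · ring
  · ext
    simp [Real.sq_sqrt h0, Real.sq_sqrt (sub_nonneg.2 h1)]

lemma measurePreserving_mehlerPoint {ρ : ℝ} (h0 : 0 ≤ ρ) (h1 : ρ ≤ 1) :
    MeasurePreserving (fun p : (Fin n → ℝ) × (Fin n → ℝ) => mehlerPoint ρ p.1 p.2)
      ((γ n).prod (γ n)) (γ n) :=
  (measurePreserving_pi _ _ fun _ => measurePreserving_sqrt_mul_add_sqrt_mul h0 h1).comp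
    (measurePreserving_arrowProdEquivProdArrow ℝ ℝ (Fin n) (fun _ => gaussianReal 0 1)
      fun _ => gaussianReal 0 1).symm

section Invariance

variable {u : (Fin n → ℝ) → ℝ} {ρ : ℝ} (hu : Integrable u (γ n)) (h0 : 0 ≤ ρ) (h1 : ρ ≤ 1)
include hu h0 h1

lemma integrable_comp_mehlerPoint :
    Integrable (fun p : (Fin n → ℝ) × (Fin n → ℝ) => u (mehlerPoint ρ p.1 p.2))
      ((γ n).prod (γ n)) :=
  (measurePreserving_mehlerPoint h0 h1).integrable_comp_of_integrable hu

lemma integrable_ouOperator : Integrable (ouOperator ρ u) (γ n) :=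
  (integrable_comp_mehlerPoint hu h0 h1).integral_prod_left

lemma integral_ouOperator : ∫ z, ouOperator ρ u z ∂γ n = ∫ x, u x ∂γ n := by
  have hmp := measurePreserving_mehlerPoint (n := n) h0 h1
  calc ∫ z, ouOperator ρ u z ∂γ n
      = ∫ p, u (mehlerPoint ρ p.1 p.2) ∂(γ n).prod (γ n) :=
        (integral_prod _ (integrable_comp_mehlerPoint hu h0 h1)).symm
    _ = ∫ x, u x ∂(((γ n).prod (γ n)).map fun p => mehlerPoint ρ p.1 p.2) :=
        (integral_map hmp.measurable.aemeasurable
          (by rw [hmp.map_eq]; exact hu.aestronglyMeasurable)).symm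
    _ = ∫ x, u x ∂γ n := by rw [hmp.map_eq]

end Invariance

lemma ouOperator_zero (u : (Fin n → ℝ) → ℝ) (z : Fin n → ℝ) :
    ouOperator 0 u z = ∫ x, u x ∂γ n := by
  simp [ouOperator, mehlerPoint]

lemma ouOperator_one (u : (Fin n → ℝ) → ℝ) (z : Fin n → ℝ) : ouOperator 1 u z = u z := by
  simp [ouOperator, mehlerPoint]

lemma ouOperator_nonneg {u : (Fin n → ℝ) → ℝ} (hu : ∀ x, 0 ≤ u x) (ρ : ℝ) (z : Fin n → ℝ) :
    0 ≤ ouOperator ρ u z :=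
  integral_nonneg fun _ => hu _

lemma abs_ouOperator_le {u : (Fin n → ℝ) → ℝ} {C : ℝ} (hC : ∀ x, |u x| ≤ C) (ρ : ℝ)
    (z : Fin n → ℝ) : |ouOperator ρ u z| ≤ C := by
  simpa [ouOperator] using norm_integral_le_of_norm_le_const (μ := γ n)
    (f := fun x => u (mehlerPoint ρ z x))
    (.of_forall fun x => hC _)

section Smoothness

variable {u v : (Fin n → ℝ) → ℝ} {k l : ℕ} {ρ : ℝ}

lemma BddDiff.comp_mehlerPoint (h : BddDiff k u) (ρ : ℝ) (z : Fin n → ℝ) :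
    BddDiff k fun x => u (mehlerPoint ρ z x) :=
  h.comp_add_smul _ _

lemma partialDeriv_comp_mehlerPoint (hu : Differentiable ℝ u) (i : Fin n) (ρ : ℝ)
    (z : Fin n → ℝ) :
    partialDeriv i (fun x => u (mehlerPoint ρ z x)) =
      fun x => √(1 - ρ) * partialDeriv i u (mehlerPoint ρ z x) :=
  partialDeriv_comp_add_smul hu i _ _

lemma continuous_ouOperator_uncurry (h : BddDiff k u) :
    Continuous fun p : ℝ × (Fin n → ℝ) => ouOperator p.1 u p.2 := by
  obtain ⟨C, hC⟩ := h.exists_bound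
  refine continuous_of_dominated (bound := fun _ => C)
    (fun p => (h.comp_mehlerPoint p.1 p.2).continuous.aestronglyMeasurable)
    (fun p => .of_forall fun x => hC _) (integrable_const _) (.of_forall fun x => ?_)
  exact h.continuous.comp (continuous_mehlerPoint.comp
    (by fun_prop : Continuous fun p : ℝ × (Fin n → ℝ) => (p.1, p.2, x)))

lemma continuous_ouOperator_left (h : BddDiff k u) (z : Fin n → ℝ) :
    Continuous fun ρ => ouOperator ρ u z :=
  (continuous_ouOperator_uncurry h).comp (by fun_prop : Continuous fun ρ : ℝ => (ρ, z))

lemma hasFDerivAt_ouOperator (h : BddDiff (k + 1) u) (ρ : ℝ) (z : Fin n → ℝ) :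
    HasFDerivAt (ouOperator ρ u) (∫ x, √ρ • fderiv ℝ u (mehlerPoint ρ z x) ∂γ n) z := by
  obtain ⟨C, hC⟩ := h.exists_bound_fderiv
  refine hasFDerivAt_integral_of_dominated_of_fderiv_le (s := Set.univ) (μ := γ n)
    (F := fun z x => u (mehlerPoint ρ z x))
    (F' := fun z x => √ρ • fderiv ℝ u (mehlerPoint ρ z x))
    (bound := fun _ => ‖√ρ‖ * C) Filter.univ_mem
    (.of_forall fun z => (h.comp_mehlerPoint ρ z).continuous.aestronglyMeasurable)
    (h.comp_mehlerPoint ρ z).integrable ?_ ?_ (integrable_const _) ?_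
  · exact ((h.continuous_fderiv.comp
      (continuous_mehlerPoint.comp (by fun_prop : Continuous fun x => (ρ, z, x)))).const_smul
        (√ρ)).aestronglyMeasurable
  · refine .of_forall fun x z _ => ?_
    rw [norm_smul]
    gcongr
    exact hC _
  · refine .of_forall fun x z _ => ?_
    have hpoint : HasFDerivAt (fun z : Fin n → ℝ => mehlerPoint ρ z x)
        (√ρ • ContinuousLinearMap.id ℝ (Fin n → ℝ)) z :=
      ((hasFDerivAt_id z).const_smul (√ρ)).add_const _
    refine ((h.differentiable _).hasFDerivAt.comp z hpoint).congr_fderiv ?_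
    ext w; simp

lemma partialDeriv_ouOperator (h : BddDiff (k + 1) u) (ρ : ℝ) (i : Fin n) :
    partialDeriv i (ouOperator ρ u) = fun z => √ρ * ouOperator ρ (partialDeriv i u) z := by
  funext z
  have hint : Integrable (fun x => √ρ • fderiv ℝ u (mehlerPoint ρ z x)) (γ n) := by
    obtain ⟨C, hC⟩ := h.exists_bound_fderiv
    exact (Integrable.of_bound (h.continuous_fderiv.comp (continuous_mehlerPoint.comp
      (by fun_prop : Continuous fun x => (ρ, z, x)))).aestronglyMeasurable C
        (.of_forall fun x => hC _)).smul (√ρ)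
  rw [partialDeriv, (hasFDerivAt_ouOperator h ρ z).fderiv,
    ContinuousLinearMap.integral_apply hint]
  simp only [_root_.smul_apply, smul_eq_mul, integral_const_mul]
  rfl

lemma BddDiff.ouOperator (h : BddDiff k u) (ρ : ℝ) : BddDiff k (ouOperator ρ u) := by
  induction k generalizing u with
  | zero =>
    obtain ⟨C, hC⟩ := h.exists_bound
    exact ⟨(continuous_ouOperator_uncurry h).comp (by fun_prop : Continuous fun z => (ρ, z)),
      C, abs_ouOperator_le hC ρ⟩
  | succ k ih =>
    obtain ⟨C, hC⟩ := h.exists_bound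
    refine ⟨fun z => (hasFDerivAt_ouOperator h ρ z).differentiableAt, ⟨C, abs_ouOperator_le hC ρ⟩,
      fun i => ?_⟩
    rw [partialDeriv_ouOperator h]
    exact (ih (h.partialDeriv i)).const_mul _

lemma gM1_comp_mehlerPoint (h : BddDiff (k + 1) u) (ρ : ℝ) (z : Fin n → ℝ) (i : Fin n) :
    gM1 n (fun x => u (mehlerPoint ρ z x)) i = √(1 - ρ) * ouOperator ρ (partialDeriv i u) z := by
  rw [(h.comp_mehlerPoint ρ z).gM1_eq, partialDeriv_comp_mehlerPoint h.differentiable,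
    integral_const_mul]
  rfl

lemma gM2_comp_mehlerPoint (h : BddDiff (k + 2) u) (h1 : ρ ≤ 1) (z : Fin n → ℝ) (i j : Fin n) :
    gM2 n (fun x => u (mehlerPoint ρ z x)) i j =
      (1 - ρ) * ouOperator ρ (partialDeriv j (partialDeriv i u)) z := by
  have hslice := (h.partialDeriv i).comp_mehlerPoint ρ z
  rw [(h.comp_mehlerPoint ρ z).gM2_eq, partialDeriv_comp_mehlerPoint h.differentiable,
    partialDeriv_const_mul hslice.differentiable,
    partialDeriv_comp_mehlerPoint (h.partialDeriv i).differentiable, integral_const_mul,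
    integral_const_mul, ← mul_assoc, Real.mul_self_sqrt (sub_nonneg.2 h1)]
  rfl

end Smoothness

section TimeDerivative

variable {u v : (Fin n → ℝ) → ℝ} {k l : ℕ} {ρ : ℝ}

/-- The derivative of `P_ρ u (z)` in `ρ`, in the form it takes after integrating by parts in the
noise variable. -/
def ouDeriv (ρ : ℝ) (u : (Fin n → ℝ) → ℝ) (z : Fin n → ℝ) : ℝ :=
  ∑ i, ((2 * √ρ)⁻¹ * (z i * ouOperator ρ (partialDeriv i u) z) -
    2⁻¹ * ouOperator ρ (partialDeriv i (partialDeriv i u)) z)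

lemma hasDerivAt_comp_mehlerPoint (hu : Differentiable ℝ u) (h0 : 0 < ρ) (h1 : ρ < 1)
    (z x : Fin n → ℝ) :
    HasDerivAt (fun ρ => u (mehlerPoint ρ z x))
      (∑ i, ((2 * √ρ)⁻¹ * z i - (2 * √(1 - ρ))⁻¹ * x i) *
        partialDeriv i u (mehlerPoint ρ z x)) ρ := by
  have hz : HasDerivAt (fun ρ : ℝ => √ρ • z) ((1 / (2 * √ρ)) • z) ρ :=
    (Real.hasDerivAt_sqrt h0.ne').smul_const z
  have hx : HasDerivAt (fun ρ : ℝ => √(1 - ρ) • x) ((-1 / (2 * √(1 - ρ))) • x) ρ :=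
    (((hasDerivAt_id' ρ).const_sub 1).sqrt (sub_pos.2 h1).ne').smul_const x
  refine ((hu _).hasFDerivAt.comp_hasDerivAt ρ (hz.add hx)).congr_deriv ?_
  rw [fderiv_eq_sum_partialDeriv]
  refine Finset.sum_congr rfl fun i _ => ?_
  simp only [Pi.add_apply, Pi.smul_apply, smul_eq_mul, mehlerPoint]
  ring

lemma integral_deriv_comp_mehlerPoint (h : BddDiff (k + 2) u) (h1 : ρ < 1) (z : Fin n → ℝ) :
    ∫ x, ∑ i, ((2 * √ρ)⁻¹ * z i - (2 * √(1 - ρ))⁻¹ * x i) *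
      partialDeriv i u (mehlerPoint ρ z x) ∂γ n = ouDeriv ρ u z := by
  have hslice (i : Fin n) := (h.partialDeriv i).comp_mehlerPoint ρ z
  have hint₁ (i : Fin n) :
      Integrable (fun x => (2 * √ρ)⁻¹ * z i * partialDeriv i u (mehlerPoint ρ z x)) (γ n) :=
    (hslice i).integrable.const_mul _
  have hint₂ (i : Fin n) : Integrable
      (fun x => (2 * √(1 - ρ))⁻¹ * (x i * partialDeriv i u (mehlerPoint ρ z x))) (γ n) :=
    (integrable_coord_mul (hslice i).memLp i).const_mul _
  have hibp (i : Fin n) : ∫ x, x i * partialDeriv i u (mehlerPoint ρ z x) ∂γ n =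
      √(1 - ρ) * ouOperator ρ (partialDeriv i (partialDeriv i u)) z :=
    gM1_comp_mehlerPoint (h.partialDeriv i) ρ z i
  have hsqrt : √(1 - ρ) ≠ 0 := (Real.sqrt_pos.2 (sub_pos.2 h1)).ne'
  have hint (i : Fin n) :
      Integrable (fun x => (2 * √ρ)⁻¹ * z i * partialDeriv i u (mehlerPoint ρ z x) -
        (2 * √(1 - ρ))⁻¹ * (x i * partialDeriv i u (mehlerPoint ρ z x))) (γ n) :=
    (hint₁ i).sub (hint₂ i)
  simp_rw [sub_mul, mul_assoc (2 * √(1 - ρ))⁻¹]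
  rw [integral_finsetSum _ fun i _ => hint i]
  refine Finset.sum_congr rfl fun i _ => ?_
  rw [integral_sub (hint₁ i) (hint₂ i), integral_const_mul, integral_const_mul, hibp, mul_assoc]
  congr 1
  field_simp

lemma inv_two_mul_sqrt_le {a b : ℝ} (ha : 0 < a) (hab : a ≤ b) : (2 * √b)⁻¹ ≤ (2 * √a)⁻¹ := by
  gcongr

lemma hasDerivAt_ouOperator (h : BddDiff (k + 2) u) (h0 : 0 < ρ) (h1 : ρ < 1) (z : Fin n → ℝ) :
    HasDerivAt (fun ρ => ouOperator ρ u z) (ouDeriv ρ u z) ρ := by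
  choose C hC using fun i => (h.partialDeriv i).exists_bound
  have hmem : Set.Ioo (ρ / 2) ((1 + ρ) / 2) ∈ nhds ρ :=
    Ioo_mem_nhds (by linarith) (by linarith)
  have key := hasDerivAt_integral_of_dominated_loc_of_deriv_le (μ := γ n)
    (F := fun ρ x => u (mehlerPoint ρ z x))
    (F' := fun ρ x => ∑ i, ((2 * √ρ)⁻¹ * z i - (2 * √(1 - ρ))⁻¹ * x i) *
      partialDeriv i u (mehlerPoint ρ z x))
    (bound := fun x => ∑ i, ((2 * √(ρ / 2))⁻¹ * |z i| + (2 * √((1 - ρ) / 2))⁻¹ * |x i|) * C i)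
    hmem (.of_forall fun ρ => (h.comp_mehlerPoint ρ z).continuous.aestronglyMeasurable)
    (h.comp_mehlerPoint ρ z).integrable ?_ ?_ ?_ ?_
  · exact key.2.congr_deriv (integral_deriv_comp_mehlerPoint h h1 z)
  · have hcont (i : Fin n) := ((h.partialDeriv i).comp_mehlerPoint ρ z).continuous
    exact (by fun_prop : Continuous _).aestronglyMeasurable
  · refine .of_forall fun x r hr => (norm_sum_le _ _).trans (Finset.sum_le_sum fun i _ => ?_)
    have hz := inv_two_mul_sqrt_le (half_pos h0) hr.1.le
    have hx := inv_two_mul_sqrt_le (half_pos (sub_pos.2 h1)) (by linarith [hr.2] : _ ≤ 1 - r)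
    rw [norm_mul, Real.norm_eq_abs, Real.norm_eq_abs]
    gcongr
    · refine (abs_sub _ _).trans ?_
      rw [abs_mul, abs_mul, abs_of_nonneg (by positivity : 0 ≤ (2 * √r)⁻¹),
        abs_of_nonneg (by positivity : 0 ≤ (2 * √(1 - r))⁻¹)]
      gcongr
    · exact hC i _
  · exact integrable_finsetSum _ fun i _ =>
      ((integrable_const _).add ((integrable_coord i).abs.const_mul _)).mul_const _
  · exact .of_forall fun x r hr => hasDerivAt_comp_mehlerPoint h.differentiable
      (by linarith [hr.1]) (by linarith [hr.2]) z x

lemma exists_integrable_bound_ouDeriv (h : BddDiff (k + 2) u) {a : ℝ} (ha : 0 < a) :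
    ∃ B : (Fin n → ℝ) → ℝ, Integrable B (γ n) ∧ ∀ r, a ≤ r → ∀ z, |ouDeriv r u z| ≤ B z := by
  choose C hC using fun i => (h.partialDeriv i).exists_bound
  choose D hD using fun i => ((h.partialDeriv i).partialDeriv i).exists_bound
  refine ⟨fun z => ∑ i, ((2 * √a)⁻¹ * (|z i| * C i) + 2⁻¹ * D i),
    integrable_finsetSum _ fun i _ => (((integrable_coord i).abs.mul_const _).const_mul _).add
      (integrable_const _), fun r hr z => ?_⟩
  refine (Finset.abs_sum_le_sum_abs _ _).trans (Finset.sum_le_sum fun i _ => ?_)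
  refine (abs_sub _ _).trans ?_
  rw [abs_mul, abs_mul, abs_mul, abs_of_nonneg (by positivity : 0 ≤ (2 * √r)⁻¹),
    abs_of_nonneg (by positivity : (0 : ℝ) ≤ 2⁻¹)]
  gcongr
  · exact abs_ouOperator_le (hC i) r z
  · exact abs_ouOperator_le (hD i) r z

/-- The correlation `∫ P_ρ u · P_ρ v dγ`, which interpolates between `(∫ u) (∫ v)` at `ρ = 0` and
`∫ u v` at `ρ = 1`. -/
def mehlerPairing (u v : (Fin n → ℝ) → ℝ) (ρ : ℝ) : ℝ :=
  ∫ z, ouOperator ρ u z * ouOperator ρ v z ∂γ n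

lemma mehlerPairing_comm (u v : (Fin n → ℝ) → ℝ) (ρ : ℝ) :
    mehlerPairing u v ρ = mehlerPairing v u ρ := by
  simp only [mehlerPairing, mul_comm]

lemma integrable_ouOperator_mul_ouOperator (hu : BddDiff k u) (hv : BddDiff l v) (ρ : ℝ) :
    Integrable (fun z => ouOperator ρ u z * ouOperator ρ v z) (γ n) :=
  (hu.ouOperator ρ).memLp.integrable_mul (hv.ouOperator ρ).memLp

lemma continuous_mehlerPairing (hu : BddDiff k u) (hv : BddDiff l v) :
    Continuous (mehlerPairing u v) := by
  obtain ⟨C, hC⟩ := hu.exists_bound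
  obtain ⟨D, hD⟩ := hv.exists_bound
  refine continuous_of_dominated (bound := fun _ => C * D)
    (fun ρ => (integrable_ouOperator_mul_ouOperator hu hv ρ).aestronglyMeasurable)
    (fun ρ => .of_forall fun z => ?_) (integrable_const _)
    (.of_forall fun z => (continuous_ouOperator_left hu z).mul (continuous_ouOperator_left hv z))
  rw [norm_mul]
  exact mul_le_mul (abs_ouOperator_le hC ρ z) (abs_ouOperator_le hD ρ z) (norm_nonneg _)
    ((abs_nonneg _).trans (hC z))

lemma integrable_coord_mul_ouOperator_mul_ouOperator (hu : BddDiff k u) (hv : BddDiff l v)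
    (ρ : ℝ) (i : Fin n) :
    Integrable (fun z => z i * (ouOperator ρ u z * ouOperator ρ v z)) (γ n) := by
  obtain ⟨C, hC⟩ := hv.exists_bound
  refine ((integrable_coord_mul (hu.ouOperator ρ).memLp i).mul_bdd (c := C)
    (hv.ouOperator ρ).continuous.aestronglyMeasurable
    (.of_forall fun z => abs_ouOperator_le hC ρ z)).congr (.of_forall fun z => ?_)
  exact mul_assoc _ _ _

lemma integral_coord_mul_ouOperator_mul_ouOperator (hu : BddDiff (k + 1) u)
    (hv : BddDiff (l + 1) v) (ρ : ℝ) (i : Fin n) :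
    ∫ z, z i * (ouOperator ρ u z * ouOperator ρ v z) ∂γ n =
      √ρ * (mehlerPairing (partialDeriv i u) v ρ + mehlerPairing u (partialDeriv i v) ρ) := by
  have hint₁ := integrable_ouOperator_mul_ouOperator (hu.partialDeriv i) hv ρ
  have hint₂ := integrable_ouOperator_mul_ouOperator hu (hv.partialDeriv i) ρ
  have hderiv (z : Fin n → ℝ) : HasLineDerivAt ℝ
      (fun z => ouOperator ρ u z * ouOperator ρ v z)
      (√ρ * (ouOperator ρ (partialDeriv i u) z * ouOperator ρ v z +
        ouOperator ρ u z * ouOperator ρ (partialDeriv i v) z)) z (Pi.single i 1) := by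
    have hU := hasLineDerivAt_partialDeriv (hu.ouOperator ρ).differentiable i z
    have hV := hasLineDerivAt_partialDeriv (hv.ouOperator ρ).differentiable i z
    rw [partialDeriv_ouOperator hu] at hU
    rw [partialDeriv_ouOperator hv] at hV
    refine (HasDerivAt.mul hU hV).congr_deriv ?_
    simp only [zero_smul, add_zero]
    ring
  rw [integral_coord_mul_eq_integral_lineDeriv i hderiv
    (integrable_ouOperator_mul_ouOperator hu hv ρ) ((hint₁.add hint₂).const_mul _)
    (integrable_coord_mul_ouOperator_mul_ouOperator hu hv ρ i), integral_const_mul,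
    integral_add hint₁ hint₂]
  rfl

lemma continuous_ouDeriv (h : BddDiff (k + 2) u) (ρ : ℝ) : Continuous (ouDeriv ρ u) := by
  have hcont₁ (i : Fin n) := ((h.partialDeriv i).ouOperator ρ).continuous
  have hcont₂ (i : Fin n) := (((h.partialDeriv i).partialDeriv i).ouOperator ρ).continuous
  unfold ouDeriv
  fun_prop

lemma integral_ouDeriv_mul_ouOperator (hu : BddDiff (k + 2) u) (hv : BddDiff (l + 1) v)
    (h0 : 0 < ρ) :
    ∫ z, ouDeriv ρ u z * ouOperator ρ v z ∂γ n =
      2⁻¹ * ∑ i, mehlerPairing (partialDeriv i u) (partialDeriv i v) ρ := by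
  have hint₁ (i : Fin n) : Integrable (fun z => (2 * √ρ)⁻¹ *
      (z i * (ouOperator ρ (partialDeriv i u) z * ouOperator ρ v z))) (γ n) :=
    (integrable_coord_mul_ouOperator_mul_ouOperator (hu.partialDeriv i) hv ρ i).const_mul _
  have hint₂ (i : Fin n) : Integrable (fun z => 2⁻¹ *
      (ouOperator ρ (partialDeriv i (partialDeriv i u)) z * ouOperator ρ v z)) (γ n) :=
    (integrable_ouOperator_mul_ouOperator ((hu.partialDeriv i).partialDeriv i) hv ρ).const_mul _
  have hint (i : Fin n) : Integrable (fun z => (2 * √ρ)⁻¹ *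
      (z i * (ouOperator ρ (partialDeriv i u) z * ouOperator ρ v z)) - 2⁻¹ *
      (ouOperator ρ (partialDeriv i (partialDeriv i u)) z * ouOperator ρ v z)) (γ n) :=
    (hint₁ i).sub (hint₂ i)
  have hsqrt : √ρ ≠ 0 := (Real.sqrt_pos.2 h0).ne'
  simp_rw [ouDeriv, Finset.sum_mul, sub_mul, mul_assoc]
  rw [integral_finsetSum _ fun i _ => hint i, Finset.mul_sum]
  refine Finset.sum_congr rfl fun i _ => ?_
  rw [integral_sub (hint₁ i) (hint₂ i), integral_const_mul, integral_const_mul,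
    integral_coord_mul_ouOperator_mul_ouOperator (hu.partialDeriv i) hv, ← mehlerPairing]
  field_simp
  ring

/-- The heat equation for the interpolation: the two Laplacian terms cancel against the drift,
leaving only the pairing of the gradients. -/
lemma hasDerivAt_mehlerPairing (hu : BddDiff (k + 2) u) (hv : BddDiff (l + 2) v) (h0 : 0 < ρ)
    (h1 : ρ < 1) :
    HasDerivAt (mehlerPairing u v)
      (∑ i, mehlerPairing (partialDeriv i u) (partialDeriv i v) ρ) ρ := by
  obtain ⟨A, hA⟩ := hu.exists_bound
  obtain ⟨B, hB⟩ := hv.exists_bound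
  obtain ⟨A', hA'int, hA'⟩ := exists_integrable_bound_ouDeriv hu (half_pos h0)
  obtain ⟨B', hB'int, hB'⟩ := exists_integrable_bound_ouDeriv hv (half_pos h0)
  have hdu (r : ℝ) (hr : r ∈ Set.Ioo (ρ / 2) 1) (z : Fin n → ℝ) :=
    hasDerivAt_ouOperator hu (by linarith [hr.1]) hr.2 z
  have hdv (r : ℝ) (hr : r ∈ Set.Ioo (ρ / 2) 1) (z : Fin n → ℝ) :=
    hasDerivAt_ouOperator hv (by linarith [hr.1]) hr.2 z
  have hint₁ : Integrable (fun z => ouDeriv ρ u z * ouOperator ρ v z) (γ n) :=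
    (hA'int.mono' (continuous_ouDeriv hu ρ).aestronglyMeasurable
      (.of_forall (hA' ρ (by linarith)))).mul_bdd (c := B)
        (hv.ouOperator ρ).continuous.aestronglyMeasurable (.of_forall (abs_ouOperator_le hB ρ))
  have hint₂ : Integrable (fun z => ouOperator ρ u z * ouDeriv ρ v z) (γ n) :=
    (hB'int.mono' (continuous_ouDeriv hv ρ).aestronglyMeasurable
      (.of_forall (hB' ρ (by linarith)))).bdd_mul (c := A)
        (hu.ouOperator ρ).continuous.aestronglyMeasurable (.of_forall (abs_ouOperator_le hA ρ))
  have key := hasDerivAt_integral_of_dominated_loc_of_deriv_le (μ := γ n)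
    (F := fun r z => ouOperator r u z * ouOperator r v z)
    (F' := fun r z => ouDeriv r u z * ouOperator r v z + ouOperator r u z * ouDeriv r v z)
    (bound := fun z => A' z * B + A * B' z) (Ioo_mem_nhds (half_lt_self h0) h1)
    (.of_forall fun r => (integrable_ouOperator_mul_ouOperator hu hv r).aestronglyMeasurable)
    (integrable_ouOperator_mul_ouOperator hu hv ρ) (hint₁.add hint₂).aestronglyMeasurable
    (.of_forall fun z r hr => ?_) ((hA'int.mul_const B).add (hB'int.const_mul A))
    (.of_forall fun z r hr => (hdu r hr z).mul (hdv r hr z))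
  · refine key.2.congr_deriv ?_
    rw [integral_add hint₁ hint₂, integral_ouDeriv_mul_ouOperator hu hv h0]
    simp_rw [mul_comm (ouOperator ρ u _)]
    rw [integral_ouDeriv_mul_ouOperator hv hu h0]
    simp_rw [mehlerPairing_comm (partialDeriv _ v)]
    ring
  · have hAr := hA' r hr.1.le z
    have hBr := hB' r hr.1.le z
    refine (norm_add_le _ _).trans ?_
    rw [norm_mul, norm_mul]
    exact add_le_add
      (mul_le_mul hAr (abs_ouOperator_le hB r z) (norm_nonneg _) ((abs_nonneg _).trans hAr))
      (mul_le_mul (abs_ouOperator_le hA r z) hBr (norm_nonneg _) ((abs_nonneg _).trans (hA z)))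

end TimeDerivative

section GradPairing

variable {u v f g : (Fin n → ℝ) → ℝ} {k l m : ℕ} {ρ W : ℝ}

/-- `∑ ∫ P_ρ (∂_α u) · P_ρ (∂_α v) dγ` over all multi-indices `α ∈ [n]ᵐ`, which is the `m`-th
derivative of `mehlerPairing u v`. -/
def gradPairing : ℕ → ((Fin n → ℝ) → ℝ) → ((Fin n → ℝ) → ℝ) → ℝ → ℝ
  | 0, u, v, ρ => mehlerPairing u v ρ
  | m + 1, u, v, ρ => ∑ i, gradPairing m (partialDeriv i u) (partialDeriv i v) ρ

lemma continuous_gradPairing (hu : BddDiff (k + m) u) (hv : BddDiff (l + m) v) :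
    Continuous (gradPairing m u v) := by
  induction m generalizing u v with
  | zero => exact continuous_mehlerPairing hu hv
  | succ m ih =>
    exact continuous_finsetSum _ fun i _ => ih (hu.partialDeriv i) (hv.partialDeriv i)

lemma hasDerivAt_gradPairing (hu : BddDiff (k + 2 + m) u) (hv : BddDiff (l + 2 + m) v)
    (h0 : 0 < ρ) (h1 : ρ < 1) :
    HasDerivAt (gradPairing m u v) (gradPairing (m + 1) u v ρ) ρ := by
  induction m generalizing u v with
  | zero => exact hasDerivAt_mehlerPairing hu hv h0 h1
  | succ m ih => exact .fun_sum fun i _ => ih (hu.partialDeriv i) (hv.partialDeriv i)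

lemma mehlerPairing_zero (u v : (Fin n → ℝ) → ℝ) :
    mehlerPairing u v 0 = (∫ x, u x ∂γ n) * ∫ x, v x ∂γ n := by
  simp [mehlerPairing, ouOperator_zero]

lemma mehlerPairing_one (u v : (Fin n → ℝ) → ℝ) :
    mehlerPairing u v 1 = ∫ x, u x * v x ∂γ n := by
  simp [mehlerPairing, ouOperator_one]

lemma mehlerPairing_nonneg (hu : ∀ x, 0 ≤ u x) (hv : ∀ x, 0 ≤ v x) (ρ : ℝ) :
    0 ≤ mehlerPairing u v ρ :=
  integral_nonneg fun z => mul_nonneg (ouOperator_nonneg hu ρ z) (ouOperator_nonneg hv ρ z)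

lemma gradPairing_one_nonneg (hu : ∀ i x, 0 ≤ partialDeriv i u x)
    (hv : ∀ i x, 0 ≤ partialDeriv i v x) (ρ : ℝ) : 0 ≤ gradPairing 1 u v ρ :=
  Finset.sum_nonneg fun i _ => mehlerPairing_nonneg (hu i) (hv i) ρ

lemma gradPairing_one_zero (hu : BddDiff (k + 1) u) (hv : BddDiff (l + 1) v) :
    gradPairing 1 u v 0 = gM1pair n u v := by
  simp only [gradPairing, mehlerPairing_zero, gM1pair, hu.gM1_eq, hv.gM1_eq]

lemma gradPairing_two_zero (hu : BddDiff (k + 2) u) (hv : BddDiff (l + 2) v) :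
    gradPairing 2 u v 0 = gM2pair n u v := by
  simp only [gradPairing, mehlerPairing_zero, gM2pair, hu.gM2_eq, hv.gM2_eq]

lemma gM2pair_comp_mehlerPoint (hu : BddDiff (k + 2) u) (hv : BddDiff (l + 2) v) (h1 : ρ ≤ 1)
    (z : Fin n → ℝ) :
    gM2pair n (fun x => u (mehlerPoint ρ z x)) (fun x => v (mehlerPoint ρ z x)) =
      ∑ i, ∑ j, (1 - ρ) ^ 2 * (ouOperator ρ (partialDeriv j (partialDeriv i u)) z *
        ouOperator ρ (partialDeriv j (partialDeriv i v)) z) := by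
  simp only [gM2pair, gM2_comp_mehlerPoint hu h1, gM2_comp_mehlerPoint hv h1]
  refine Finset.sum_congr rfl fun i _ => Finset.sum_congr rfl fun j _ => ?_
  ring

lemma integrable_gM2pair_comp_mehlerPoint (hu : BddDiff (k + 2) u) (hv : BddDiff (l + 2) v)
    (h1 : ρ ≤ 1) :
    Integrable (fun z => gM2pair n (fun x => u (mehlerPoint ρ z x))
      fun x => v (mehlerPoint ρ z x)) (γ n) := by
  simp only [gM2pair_comp_mehlerPoint hu hv h1]
  exact integrable_finsetSum _ fun i _ => integrable_finsetSum _ fun j _ =>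
    (integrable_ouOperator_mul_ouOperator ((hu.partialDeriv i).partialDeriv j)
      ((hv.partialDeriv i).partialDeriv j) ρ).const_mul _

lemma integral_gM2pair_comp_mehlerPoint (hu : BddDiff (k + 2) u) (hv : BddDiff (l + 2) v)
    (h1 : ρ ≤ 1) :
    ∫ z, gM2pair n (fun x => u (mehlerPoint ρ z x)) (fun x => v (mehlerPoint ρ z x)) ∂γ n =
      (1 - ρ) ^ 2 * gradPairing 2 u v ρ := by
  have hint (i j : Fin n) := (integrable_ouOperator_mul_ouOperator
    ((hu.partialDeriv i).partialDeriv j) ((hv.partialDeriv i).partialDeriv j) ρ).const_mul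
      ((1 - ρ) ^ 2)
  simp only [gM2pair_comp_mehlerPoint hu hv h1, gradPairing, Finset.mul_sum]
  rw [integral_finsetSum _ fun i _ => integrable_finsetSum _ fun j _ => hint i j]
  refine Finset.sum_congr rfl fun i _ => ?_
  rw [integral_finsetSum _ fun j _ => hint i j]
  exact Finset.sum_congr rfl fun j _ => integral_const_mul _ _

/-- The second-moment bound, applied to the slices `x ↦ u (√ρ z + √(1 - ρ) x)` and averaged over
`z`. -/
lemma neg_mul_add_log_mul_le_gradPairing_two (hu : BddDiff (k + 2) u) (hv : BddDiff (l + 2) v)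
    (hu0 : ∀ x, 0 ≤ u x) (hv0 : ∀ x, 0 ≤ v x) (hW : 0 < W) (hW1 : W ≤ 1) (h0 : 0 ≤ ρ)
    (h1 : ρ ≤ 1) :
    -8 * (W * ((∫ x, u x ^ 2 ∂γ n) + ∫ x, v x ^ 2 ∂γ n) +
      2 * -Real.log W * mehlerPairing u v ρ) ≤ (1 - ρ) ^ 2 * gradPairing 2 u v ρ := by
  have hint₁ := integrable_ouOperator hu.memLp.integrable_sq h0 h1
  have hint₂ := integrable_ouOperator hv.memLp.integrable_sq h0 h1
  have hint := integrable_ouOperator_mul_ouOperator hu hv ρ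
  have hsq : Integrable (fun z => W * (ouOperator ρ (fun x => u x ^ 2) z +
      ouOperator ρ (fun x => v x ^ 2) z)) (γ n) := (hint₁.add hint₂).const_mul W
  have hlog := hint.const_mul (2 * -Real.log W)
  calc -8 * (W * ((∫ x, u x ^ 2 ∂γ n) + ∫ x, v x ^ 2 ∂γ n) +
        2 * -Real.log W * mehlerPairing u v ρ)
      = ∫ z, -8 * (W * (ouOperator ρ (fun x => u x ^ 2) z + ouOperator ρ (fun x => v x ^ 2) z) +
          2 * -Real.log W * (ouOperator ρ u z * ouOperator ρ v z)) ∂γ n := by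
        rw [integral_const_mul, integral_add hsq hlog, integral_const_mul, integral_const_mul,
          integral_add hint₁ hint₂, integral_ouOperator hu.memLp.integrable_sq h0 h1,
          integral_ouOperator hv.memLp.integrable_sq h0 h1, mehlerPairing]
    _ ≤ ∫ z, gM2pair n (fun x => u (mehlerPoint ρ z x)) (fun x => v (mehlerPoint ρ z x)) ∂γ n :=
        integral_mono ((hsq.add hlog).const_mul (-8))
          (integrable_gM2pair_comp_mehlerPoint hu hv h1) fun z =>
            neg_mul_add_log_mul_le_gM2pair (hu.comp_mehlerPoint ρ z).memLp
              (.of_forall fun _ => hu0 _) (hv.comp_mehlerPoint ρ z).memLp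
              (.of_forall fun _ => hv0 _) hW hW1
    _ = (1 - ρ) ^ 2 * gradPairing 2 u v ρ := integral_gM2pair_comp_mehlerPoint hu hv h1

lemma neg_add_log_mul_le_gradPairing_three (hf : BddDiff (k + 3) f) (hg : BddDiff (l + 3) g)
    (hf0 : ∀ i x, 0 ≤ partialDeriv i f x) (hg0 : ∀ i x, 0 ≤ partialDeriv i g x)
    (hf1 : ∑ i, ∫ x, partialDeriv i f x ^ 2 ∂γ n ≤ 1)
    (hg1 : ∑ i, ∫ x, partialDeriv i g x ^ 2 ∂γ n ≤ 1)
    (hW : 0 < W) (hW1 : W ≤ 1) (h0 : 0 ≤ ρ) (h1 : ρ ≤ 1) :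
    -16 * (W + -Real.log W * gradPairing 1 f g ρ) ≤ (1 - ρ) ^ 2 * gradPairing 3 f g ρ := by
  calc -16 * (W + -Real.log W * gradPairing 1 f g ρ)
      ≤ -8 * (W * ((∑ i, ∫ x, partialDeriv i f x ^ 2 ∂γ n) +
          ∑ i, ∫ x, partialDeriv i g x ^ 2 ∂γ n) + 2 * -Real.log W * gradPairing 1 f g ρ) := by
        nlinarith
    _ = ∑ i, -8 * (W * ((∫ x, partialDeriv i f x ^ 2 ∂γ n) + ∫ x, partialDeriv i g x ^ 2 ∂γ n) +
          2 * -Real.log W * mehlerPairing (partialDeriv i f) (partialDeriv i g) ρ) := by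
        simp only [gradPairing, ← Finset.mul_sum, Finset.sum_add_distrib]
    _ ≤ ∑ i, (1 - ρ) ^ 2 * gradPairing 2 (partialDeriv i f) (partialDeriv i g) ρ :=
        Finset.sum_le_sum fun i _ => neg_mul_add_log_mul_le_gradPairing_two (hf.partialDeriv i)
          (hg.partialDeriv i) (hf0 i) (hg0 i) hW hW1 h0 h1
    _ = (1 - ρ) ^ 2 * gradPairing 3 f g ρ := (Finset.mul_sum _ _ _).symm

end GradPairing

/-! ### The inequality for smooth functions -/

section SmoothFunctions

variable {u v f g : (Fin n → ℝ) → ℝ} {k l : ℕ} {ρ : ℝ}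

lemma monotoneOn_mehlerPairing (hu : BddDiff (k + 2) u) (hv : BddDiff (l + 2) v)
    (hu0 : ∀ i x, 0 ≤ partialDeriv i u x) (hv0 : ∀ i x, 0 ≤ partialDeriv i v x) :
    MonotoneOn (mehlerPairing u v) (Set.Icc 0 1) := by
  refine monotoneOn_of_hasDerivWithinAt_nonneg (f' := gradPairing 1 u v) (convex_Icc 0 1)
    (continuous_mehlerPairing hu hv).continuousOn (fun ρ hρ => ?_)
    fun ρ _ => gradPairing_one_nonneg hu0 hv0 ρ
  rw [interior_Icc] at hρ
  exact (hasDerivAt_mehlerPairing hu hv hρ.1 hρ.2).hasDerivWithinAt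

lemma gM1pair_ouOperator (hu : BddDiff (k + 1) u) (hv : BddDiff (l + 1) v) (h0 : 0 ≤ ρ)
    (h1 : ρ ≤ 1) :
    gM1pair n (ouOperator ρ u) (ouOperator ρ v) = ρ * gM1pair n u v := by
  have hgM1 {w : (Fin n → ℝ) → ℝ} {m : ℕ} (hw : BddDiff (m + 1) w) (i : Fin n) :
      gM1 n (ouOperator ρ w) i = √ρ * gM1 n w i := by
    rw [(hw.ouOperator ρ).gM1_eq, hw.gM1_eq, partialDeriv_ouOperator hw, integral_const_mul,
      integral_ouOperator (hw.partialDeriv i).integrable h0 h1]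
  simp only [gM1pair, hgM1 hu, hgM1 hv, Finset.mul_sum]
  exact Finset.sum_congr rfl fun i _ => by rw [mul_mul_mul_comm, Real.mul_self_sqrt h0]

lemma gM2pair_ouOperator (hu : BddDiff (k + 2) u) (hv : BddDiff (l + 2) v) (h0 : 0 ≤ ρ)
    (h1 : ρ ≤ 1) :
    gM2pair n (ouOperator ρ u) (ouOperator ρ v) = ρ ^ 2 * gM2pair n u v := by
  have hgM2 {w : (Fin n → ℝ) → ℝ} {m : ℕ} (hw : BddDiff (m + 2) w) (i j : Fin n) :
      gM2 n (ouOperator ρ w) i j = ρ * gM2 n w i j := by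
    rw [(hw.ouOperator ρ).gM2_eq, hw.gM2_eq, partialDeriv_ouOperator hw,
      partialDeriv_const_mul ((hw.partialDeriv i).ouOperator ρ).differentiable,
      partialDeriv_ouOperator (hw.partialDeriv i), integral_const_mul, integral_const_mul,
      integral_ouOperator ((hw.partialDeriv i).partialDeriv j).integrable h0 h1, ← mul_assoc,
      Real.mul_self_sqrt h0]
  simp only [gM2pair, hgM2 hu, hgM2 hv, Finset.mul_sum]
  exact Finset.sum_congr rfl fun i _ => Finset.sum_congr rfl fun j _ => by
    rw [mul_mul_mul_comm, ← sq]

/-- Bessel's inequality on the slices `x ↦ u (√ρ z + √(1 - ρ) x)`. -/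
lemma sum_sq_partialDeriv_ouOperator_le (hu : BddDiff (k + 1) u) {C : ℝ} (hC : ∀ x, |u x| ≤ C)
    (h0 : 0 ≤ ρ) (h1 : ρ ≤ 1) (z : Fin n → ℝ) :
    (1 - ρ) * ∑ i, partialDeriv i (ouOperator ρ u) z ^ 2 ≤ ρ * C ^ 2 := by
  have hslice := hu.comp_mehlerPoint ρ z
  calc (1 - ρ) * ∑ i, partialDeriv i (ouOperator ρ u) z ^ 2
      = ρ * ∑ i, gM1 n (fun x => u (mehlerPoint ρ z x)) i ^ 2 := by
        simp only [gM1_comp_mehlerPoint hu, partialDeriv_ouOperator hu, mul_pow, Real.sq_sqrt h0,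
          Real.sq_sqrt (sub_nonneg.2 h1), ← Finset.mul_sum, mul_left_comm]
    _ ≤ ρ * ∫ x, u (mehlerPoint ρ z x) ^ 2 ∂γ n := by gcongr; exact sum_gM1_sq_le hslice.memLp
    _ ≤ ρ * ∫ _, C ^ 2 ∂γ n := by
        gcongr
        · exact hslice.memLp.integrable_sq
        · exact integrable_const _
        · exact fun x => sq_le_sq.2 ((hC _).trans (le_abs_self C))
    _ = ρ * C ^ 2 := by simp

lemma sum_integral_sq_partialDeriv_ouOperator_half_le (hu : BddDiff (k + 1) u)
    (hu1 : ∀ x, |u x| ≤ 1) :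
    ∑ i, ∫ x, partialDeriv i (ouOperator (1 / 2) u) x ^ 2 ∂γ n ≤ 1 := by
  have hint (i : Fin n) :=
    ((hu.ouOperator (1 / 2)).partialDeriv i).memLp.integrable_sq
  calc ∑ i, ∫ x, partialDeriv i (ouOperator (1 / 2) u) x ^ 2 ∂γ n
      = ∫ x, ∑ i, partialDeriv i (ouOperator (1 / 2) u) x ^ 2 ∂γ n :=
        (integral_finsetSum _ fun i _ => hint i).symm
    _ ≤ ∫ _, 1 ∂γ n :=
        integral_mono (integrable_finsetSum _ fun i _ => hint i) (integrable_const _) fun x => by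
          linarith [sum_sq_partialDeriv_ouOperator_le hu hu1 one_half_pos.le one_half_lt_one.le x]
    _ = 1 := by simp

/-- The function `φ x + (r - x) φ₁ x + (r - x)² / 2 · φ₂ x + r² / 2 · (A x + B φ x)` is monotone on
`[0, r]`: the lower bound on the third derivative enters with weight `(r - x)² / 2 ≤ r² / 2`. -/
lemma taylor_two_le_of_third_deriv_ge {φ φ₁ φ₂ φ₃ : ℝ → ℝ} {r A B : ℝ} (hr : 0 ≤ r)
    (hφ : ContinuousOn φ (Set.Icc 0 r)) (hφ₁ : ContinuousOn φ₁ (Set.Icc 0 r))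
    (hφ₂ : ContinuousOn φ₂ (Set.Icc 0 r)) (hd : ∀ x ∈ Set.Ioo 0 r, HasDerivAt φ (φ₁ x) x)
    (hd₁ : ∀ x ∈ Set.Ioo 0 r, HasDerivAt φ₁ (φ₂ x) x)
    (hd₂ : ∀ x ∈ Set.Ioo 0 r, HasDerivAt φ₂ (φ₃ x) x)
    (hpos : ∀ x ∈ Set.Ioo 0 r, 0 ≤ A + B * φ₁ x)
    (hφ₃ : ∀ x ∈ Set.Ioo 0 r, -(A + B * φ₁ x) ≤ φ₃ x) :
    r * φ₁ 0 + r ^ 2 / 2 * φ₂ 0 - A * r ^ 3 / 2 ≤ (1 + B * r ^ 2 / 2) * (φ r - φ 0) := by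
  have hmono : MonotoneOn (fun x => φ x + (r - x) * φ₁ x + (r - x) ^ 2 / 2 * φ₂ x +
      r ^ 2 / 2 * (A * x + B * φ x)) (Set.Icc 0 r) := by
    refine monotoneOn_of_hasDerivWithinAt_nonneg
      (f' := fun x => (r - x) ^ 2 / 2 * φ₃ x + r ^ 2 / 2 * (A + B * φ₁ x)) (convex_Icc 0 r)
      (by fun_prop) (fun x hx => ?_) fun x hx => ?_ <;> rw [interior_Icc] at hx
    · have hsub : HasDerivAt (fun x : ℝ => r - x) (-1) x := (hasDerivAt_id' x).const_sub r
      have h₁ := hsub.fun_mul (hd₁ x hx)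
      have h₂ := ((hsub.fun_pow 2).div_const 2).fun_mul (hd₂ x hx)
      have h₃ := (((hasDerivAt_id' x).const_mul A).fun_add ((hd x hx).const_mul B)).const_mul
        (r ^ 2 / 2)
      refine ((((hd x hx).fun_add h₁).fun_add h₂).fun_add h₃).congr_deriv ?_ |>.hasDerivWithinAt
      push_cast
      ring
    · have hsq : (r - x) ^ 2 ≤ r ^ 2 := by nlinarith [hx.1, hx.2]
      nlinarith [mul_le_mul_of_nonneg_left (hφ₃ x hx) (sq_nonneg (r - x)),
        mul_le_mul_of_nonneg_right hsq (hpos x hx)]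
  have hends := hmono (Set.left_mem_Icc.2 hr) (Set.right_mem_Icc.2 hr) hr
  simp only at hends
  linarith

lemma partialDeriv_ouOperator_nonneg (hu : BddDiff (k + 1) u) {i : Fin n}
    (hu0 : ∀ x, 0 ≤ partialDeriv i u x) (ρ : ℝ) (x : Fin n → ℝ) :
    0 ≤ partialDeriv i (ouOperator ρ u) x := by
  rw [partialDeriv_ouOperator hu]
  exact mul_nonneg (Real.sqrt_nonneg ρ) (ouOperator_nonneg hu0 ρ x)

lemma mehlerPairing_ouOperator_sub_le_gCor (hf : BddDiff (k + 2) f) (hg : BddDiff (l + 2) g)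
    (hf0 : ∀ i x, 0 ≤ partialDeriv i f x) (hg0 : ∀ i x, 0 ≤ partialDeriv i g x) {r : ℝ}
    (hρ : ρ ∈ Set.Icc 0 1) (hr : r ∈ Set.Icc 0 1) :
    mehlerPairing (ouOperator ρ f) (ouOperator ρ g) r -
      mehlerPairing (ouOperator ρ f) (ouOperator ρ g) 0 ≤ gCor n f g := by
  have hone : (1 : ℝ) ∈ Set.Icc 0 1 := Set.right_mem_Icc.2 zero_le_one
  have hzero : mehlerPairing (ouOperator ρ f) (ouOperator ρ g) 0 =
      (∫ x, f x ∂γ n) * ∫ x, g x ∂γ n := by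
    rw [mehlerPairing_zero, integral_ouOperator hf.integrable hρ.1 hρ.2,
      integral_ouOperator hg.integrable hρ.1 hρ.2]
  have hle : mehlerPairing (ouOperator ρ f) (ouOperator ρ g) r ≤ ∫ x, f x * g x ∂γ n :=
    calc mehlerPairing (ouOperator ρ f) (ouOperator ρ g) r
        ≤ mehlerPairing (ouOperator ρ f) (ouOperator ρ g) 1 :=
          monotoneOn_mehlerPairing (hf.ouOperator ρ) (hg.ouOperator ρ)
            (fun i => partialDeriv_ouOperator_nonneg hf (hf0 i) ρ)
            (fun i => partialDeriv_ouOperator_nonneg hg (hg0 i) ρ) hr hone hr.2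
      _ = mehlerPairing f g ρ := mehlerPairing_one _ _
      _ ≤ mehlerPairing f g 1 := monotoneOn_mehlerPairing hf hg hf0 hg0 hρ hone hρ.2
      _ = ∫ x, f x * g x ∂γ n := mehlerPairing_one f g
  rw [gCor, hzero]
  linarith

lemma neg_add_log_mul_le_gradPairing_three_of_le_half {W : ℝ} (hf : BddDiff (k + 3) f)
    (hg : BddDiff (l + 3) g) (hf0 : ∀ i x, 0 ≤ partialDeriv i f x)
    (hg0 : ∀ i x, 0 ≤ partialDeriv i g x) (hf1 : ∑ i, ∫ x, partialDeriv i f x ^ 2 ∂γ n ≤ 1)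
    (hg1 : ∑ i, ∫ x, partialDeriv i g x ^ 2 ∂γ n ≤ 1) (hW : 0 < W) (hW1 : W ≤ 1) (h0 : 0 ≤ ρ)
    (h1 : ρ ≤ 1 / 2) :
    -(64 * W + 64 * -Real.log W * gradPairing 1 f g ρ) ≤ gradPairing 3 f g ρ := by
  have hbound := neg_add_log_mul_le_gradPairing_three hf hg hf0 hg0 hf1 hg1 hW hW1 h0
    (h1.trans one_half_lt_one.le)
  have hlog : 0 ≤ -Real.log W * gradPairing 1 f g ρ :=
    mul_nonneg (neg_nonneg.2 (Real.log_nonpos hW.le hW1)) (gradPairing_one_nonneg hf0 hg0 ρ)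
  have hρ : 1 / 4 ≤ (1 - ρ) ^ 2 := by nlinarith
  by_contra! hneg
  nlinarith

lemma add_sub_le_mul_mehlerPairing_sub {W r : ℝ} (hf : BddDiff (k + 4) f)
    (hg : BddDiff (l + 4) g) (hf0 : ∀ i x, 0 ≤ partialDeriv i f x)
    (hg0 : ∀ i x, 0 ≤ partialDeriv i g x) (hf1 : ∑ i, ∫ x, partialDeriv i f x ^ 2 ∂γ n ≤ 1)
    (hg1 : ∑ i, ∫ x, partialDeriv i g x ^ 2 ∂γ n ≤ 1) (hW : 0 < W) (hW1 : W ≤ 1) (hr : 0 ≤ r)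
    (hr1 : r ≤ 1 / 2) :
    r * gM1pair n f g + r ^ 2 / 2 * gM2pair n f g - 64 * W * r ^ 3 / 2 ≤
      (1 + 64 * -Real.log W * r ^ 2 / 2) * (mehlerPairing f g r - mehlerPairing f g 0) := by
  have hlog : 0 ≤ -Real.log W := neg_nonneg.2 (Real.log_nonpos hW.le hW1)
  have hlt {x : ℝ} (hx : x ∈ Set.Ioo 0 r) : x < 1 := by linarith [hx.2]
  rw [← gradPairing_one_zero hf hg, ← gradPairing_two_zero hf hg]
  refine taylor_two_le_of_third_deriv_ge hr (continuous_mehlerPairing hf hg).continuousOn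
    (continuous_gradPairing (k := k + 3) (l := l + 3) hf hg).continuousOn
    (continuous_gradPairing (k := k + 2) (l := l + 2) hf hg).continuousOn
    (fun x hx => hasDerivAt_mehlerPairing hf hg hx.1 (hlt hx))
    (fun x hx => hasDerivAt_gradPairing (k := k + 1) (l := l + 1) hf hg hx.1 (hlt hx))
    (fun x hx => hasDerivAt_gradPairing (k := k) (l := l) hf hg hx.1 (hlt hx))
    (fun x _ => ?_) fun x hx => neg_add_log_mul_le_gradPairing_three_of_le_half
      (k := k + 1) (l := l + 1) hf hg hf0 hg0 hf1 hg1 hW hW1 hx.1.le (hx.2.le.trans hr1)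
  have hgrad := gradPairing_one_nonneg hf0 hg0 x
  positivity

/-- The functions are first replaced by `P_{1/2} f` and `P_{1/2} g`, whose gradients are bounded
independently of the dimension. -/
lemma sub_le_mul_gCor_of_bddDiff {W r : ℝ} (hf : BddDiff (k + 4) f) (hg : BddDiff (l + 4) g)
    (hf0 : ∀ i x, 0 ≤ partialDeriv i f x) (hg0 : ∀ i x, 0 ≤ partialDeriv i g x)
    (hf1 : ∀ x, |f x| ≤ 1) (hg1 : ∀ x, |g x| ≤ 1) (hW : 0 < W) (hW1 : W ≤ 1) (hr : 0 ≤ r)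
    (hr1 : r ≤ 1 / 2) :
    r * gM1pair n f g / 2 - r ^ 2 * |gM2pair n f g| / 8 - 32 * W * r ^ 3 ≤
      (1 + 32 * r ^ 2 * -Real.log W) * gCor n f g := by
  have hhalf : (1 / 2 : ℝ) ∈ Set.Icc 0 1 := by norm_num
  have hlog : 0 ≤ -Real.log W := neg_nonneg.2 (Real.log_nonpos hW.le hW1)
  have htaylor := add_sub_le_mul_mehlerPairing_sub (hf.ouOperator (1 / 2)) (hg.ouOperator (1 / 2))
    (fun i => partialDeriv_ouOperator_nonneg hf (hf0 i) _)
    (fun i => partialDeriv_ouOperator_nonneg hg (hg0 i) _)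
    (sum_integral_sq_partialDeriv_ouOperator_half_le hf hf1)
    (sum_integral_sq_partialDeriv_ouOperator_half_le hg hg1) hW hW1 hr hr1
  rw [gM1pair_ouOperator hf hg hhalf.1 hhalf.2, gM2pair_ouOperator hf hg hhalf.1 hhalf.2] at htaylor
  have hcor := mehlerPairing_ouOperator_sub_le_gCor hf hg hf0 hg0 hhalf
    ⟨hr, hr1.trans hhalf.2⟩
  have hM2 := mul_le_mul_of_nonneg_left (neg_abs_le (gM2pair n f g)) (sq_nonneg r)
  have hmul := mul_le_mul_of_nonneg_left hcor
    (by positivity : 0 ≤ 1 + 64 * -Real.log W * r ^ 2 / 2)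
  linarith

end SmoothFunctions

/-! ### Mollification -/

section Mollification

open scoped Convolution ContDiff

variable {φ f : (Fin n → ℝ) → ℝ}

lemma partialDeriv_convolution (hφ : ContDiff ℝ 1 φ) (hc : HasCompactSupport φ)
    (hf : LocallyIntegrable f) (i : Fin n) : partialDeriv i (φ ⋆ f) = partialDeriv i φ ⋆ f := by
  funext x
  have hex := (hc.fderiv (𝕜 := ℝ)).convolutionExists_left
    ((ContinuousLinearMap.lsmul ℝ ℝ).precompL (Fin n → ℝ))
    (hφ.continuous_fderiv one_ne_zero) hf x
  have hderiv := hc.hasFDerivAt_convolution_left (ContinuousLinearMap.lsmul ℝ ℝ) hφ hf x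
  rw [partialDeriv, hderiv.fderiv]
  exact ContinuousLinearMap.integral_apply hex _

lemma abs_convolution_le {C : ℝ} (hφ : Integrable φ) (hC : ∀ x, |f x| ≤ C) (x : Fin n → ℝ) :
    |(φ ⋆ f) x| ≤ (∫ t, |φ t|) * C := by
  rw [← integral_mul_const]
  refine norm_integral_le_of_norm_le (f := fun t => φ t * f (x - t)) (hφ.abs.mul_const C)
    (.of_forall fun t => ?_)
  rw [norm_mul]
  exact mul_le_mul_of_nonneg_left (hC _) (norm_nonneg _)

lemma bddDiff_convolution (hφ : ContDiff ℝ ∞ φ) (hc : HasCompactSupport φ)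
    (hf : LocallyIntegrable f) {C : ℝ} (hC : ∀ x, |f x| ≤ C) (k : ℕ) : BddDiff k (φ ⋆ f) := by
  have hbound {φ : (Fin n → ℝ) → ℝ} (hφ : ContDiff ℝ ∞ φ) (hc : HasCompactSupport φ) :
      ∃ C, ∀ x, |(φ ⋆ f) x| ≤ C :=
    ⟨_, abs_convolution_le (hφ.continuous.integrable_of_hasCompactSupport hc) hC⟩
  induction k generalizing φ with
  | zero => exact ⟨hc.continuous_convolution_left _ hφ.continuous hf, hbound hφ hc⟩
  | succ k ih =>
    have hφ₁ : ContDiff ℝ 1 φ := hφ.of_le (mod_cast le_top)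
    refine ⟨(hc.contDiff_convolution_left _ hφ₁ hf).differentiable one_ne_zero, hbound hφ hc,
      fun i => ?_⟩
    rw [partialDeriv_convolution hφ₁ hc hf]
    exact ih ((hφ.fderiv_right (m := ∞) le_rfl).clm_apply contDiff_const) (hc.fderiv_apply ℝ _)

lemma CoordMonotone.monotone_add_smul_single (hf : CoordMonotone n f) (x : Fin n → ℝ)
    (i : Fin n) : Monotone fun t : ℝ => f (x + t • Pi.single i 1) := by
  have hupdate (t : ℝ) : x + t • Pi.single i 1 = Function.update x i (x i + t) := by
    funext j
    by_cases h : j = i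
    · subst h; simp
    · simp [h]
  intro s t hst
  simp only [hupdate]
  exact hf x i _ _ (by gcongr)

lemma partialDeriv_convolution_nonneg (hφ : ContDiff ℝ 1 φ) (hc : HasCompactSupport φ)
    (hφ0 : ∀ x, 0 ≤ φ x) (hf : LocallyIntegrable f) (hm : CoordMonotone n f) (i : Fin n)
    (x : Fin n → ℝ) : 0 ≤ partialDeriv i (φ ⋆ f) x := by
  have hdiff : Differentiable ℝ (φ ⋆ f) :=
    (hc.contDiff_convolution_left _ hφ hf).differentiable one_ne_zero
  have hex := hc.convolutionExists_left (ContinuousLinearMap.lsmul ℝ ℝ) hφ.continuous hf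
  refine HasDerivAt.nonneg_of_monotone (hasLineDerivAt_partialDeriv hdiff i x) fun s t hst =>
    integral_mono (hex _) (hex _) fun y => mul_le_mul_of_nonneg_left ?_ (hφ0 y)
  simp only [add_sub_right_comm x]
  exact hm.monotone_add_smul_single (x - y) i hst

lemma exists_bddDiff_tendsto (hf : Measurable f) (hf1 : ∀ x, |f x| ≤ 1) (hm : CoordMonotone n f) :
    ∃ F : ℕ → (Fin n → ℝ) → ℝ, (∀ m k, BddDiff k (F m)) ∧
      (∀ m i x, 0 ≤ partialDeriv i (F m) x) ∧ (∀ m x, |F m x| ≤ 1) ∧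
      ∀ᵐ x ∂γ n, Filter.Tendsto (F · x) Filter.atTop (nhds (f x)) := by
  have hloc : LocallyIntegrable f :=
    (locallyIntegrable_const (1 : ℝ)).mono hf.aestronglyMeasurable
      (.of_forall fun x => by simpa using hf1 x)
  let ψ (m : ℕ) : ContDiffBump (0 : Fin n → ℝ) :=
    { rIn := 1 / (m + 1) / 2
      rOut := 1 / (m + 1)
      rIn_pos := by positivity
      rIn_lt_rOut := half_lt_self (by positivity) }
  have hlim : ∀ᵐ x, Filter.Tendsto (fun m => ((ψ m).normed volume ⋆ f) x) Filter.atTop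
      (nhds (f x)) :=
    ContDiffBump.ae_convolution_tendsto_right_of_locallyIntegrable (K := 2)
      tendsto_one_div_add_atTop_nhds_zero_nat
      (.of_forall fun m => (mul_div_cancel₀ _ two_ne_zero).ge) hloc
  have hmass (m : ℕ) : ∫ x, |(ψ m).normed volume x| = 1 := by
    simp only [abs_of_nonneg ((ψ m).nonneg_normed _), (ψ m).integral_normed]
  refine ⟨fun m => (ψ m).normed volume ⋆ f, fun m =>
    bddDiff_convolution (ψ m).contDiff_normed (ψ m).hasCompactSupport_normed hloc hf1,
    fun m => partialDeriv_convolution_nonneg (ψ m).contDiff_normed (ψ m).hasCompactSupport_normed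
      (ψ m).nonneg_normed hloc hm, fun m x => ?_, stdGaussian_absolutelyContinuous.ae_le hlim⟩
  simpa only [hmass, one_mul] using abs_convolution_le (ψ m).integrable_normed hf1 x

end Mollification

/-! ### Passage to the limit -/

section Limit

open Filter Topology

lemma tendsto_integral_mul_of_abs_le_one {α : Type*} {m : MeasurableSpace α} {μ : Measure α}
    {F : ℕ → α → ℝ} {f w : α → ℝ} (hw : Integrable w μ) (hF : ∀ k, AEStronglyMeasurable (F k) μ)
    (hF1 : ∀ k x, |F k x| ≤ 1) (hlim : ∀ᵐ x ∂μ, Tendsto (F · x) atTop (𝓝 (f x))) :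
    Tendsto (fun k => ∫ x, w x * F k x ∂μ) atTop (𝓝 (∫ x, w x * f x ∂μ)) := by
  refine tendsto_integral_of_dominated_convergence (fun x => |w x|)
    (fun k => hw.aestronglyMeasurable.mul (hF k)) hw.abs (fun k => .of_forall fun x => ?_) ?_
  · rw [norm_mul]
    exact mul_le_of_le_one_right (norm_nonneg _) (hF1 k x)
  · filter_upwards [hlim] with x hx using hx.const_mul _

variable {F G : ℕ → (Fin n → ℝ) → ℝ} {f g : (Fin n → ℝ) → ℝ}

section Functionals

variable (hF : ∀ k, AEStronglyMeasurable (F k) (γ n)) (hF1 : ∀ k x, |F k x| ≤ 1)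
  (hFf : ∀ᵐ x ∂γ n, Tendsto (F · x) atTop (𝓝 (f x)))
  (hG : ∀ k, AEStronglyMeasurable (G k) (γ n)) (hG1 : ∀ k x, |G k x| ≤ 1)
  (hGg : ∀ᵐ x ∂γ n, Tendsto (G · x) atTop (𝓝 (g x)))
include hF hF1 hFf

lemma tendsto_gM1 (i : Fin n) : Tendsto (fun k => gM1 n (F k) i) atTop (𝓝 (gM1 n f i)) :=
  tendsto_integral_mul_of_abs_le_one (integrable_coord i) hF hF1 hFf

lemma tendsto_gM2 (i j : Fin n) : Tendsto (fun k => gM2 n (F k) i j) atTop (𝓝 (gM2 n f i j)) :=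
  tendsto_integral_mul_of_abs_le_one
    ((integrable_coord_mul_coord i j).sub (integrable_const _)) hF hF1 hFf

include hG hG1 hGg

lemma tendsto_gM1pair : Tendsto (fun k => gM1pair n (F k) (G k)) atTop (𝓝 (gM1pair n f g)) :=
  tendsto_finsetSum _ fun i _ => (tendsto_gM1 hF hF1 hFf i).mul (tendsto_gM1 hG hG1 hGg i)

lemma tendsto_gM2pair : Tendsto (fun k => gM2pair n (F k) (G k)) atTop (𝓝 (gM2pair n f g)) :=
  tendsto_finsetSum _ fun i _ => tendsto_finsetSum _ fun j _ =>
    (tendsto_gM2 hF hF1 hFf i j).mul (tendsto_gM2 hG hG1 hGg i j)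

lemma tendsto_gCor : Tendsto (fun k => gCor n (F k) (G k)) atTop (𝓝 (gCor n f g)) := by
  have hone : Integrable (fun _ : Fin n → ℝ => (1 : ℝ)) (γ n) := integrable_const 1
  have hf := tendsto_integral_mul_of_abs_le_one hone hF hF1 hFf
  have hg := tendsto_integral_mul_of_abs_le_one hone hG hG1 hGg
  have hfg := tendsto_integral_mul_of_abs_le_one (F := fun k x => F k x * G k x)
    (f := fun x => f x * g x) hone (fun k => (hF k).mul (hG k))
    (fun k x => by rw [abs_mul]; exact mul_le_one₀ (hF1 k x) (abs_nonneg _) (hG1 k x))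
    (by filter_upwards [hFf, hGg] with x hx hy using hx.mul hy)
  simp only [one_mul] at hf hg hfg
  exact hfg.sub (hf.mul hg)

end Functionals

lemma gM1_nonneg (hf : Measurable f) (hf1 : ∀ x, |f x| ≤ 1) (hfm : CoordMonotone n f)
    (i : Fin n) : 0 ≤ gM1 n f i := by
  obtain ⟨F, hF, hF0, hF1, hFf⟩ := exists_bddDiff_tendsto hf hf1 hfm
  refine ge_of_tendsto'
    (tendsto_gM1 (fun m => (hF m 0).continuous.aestronglyMeasurable) hF1 hFf i) fun m => ?_
  rw [(hF m 1).gM1_eq]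
  exact integral_nonneg (hF0 m i)

lemma gM1pair_le_one (hf : Measurable f) (hg : Measurable g) (hf1 : ∀ x, |f x| ≤ 1)
    (hg1 : ∀ x, |g x| ≤ 1) : gM1pair n f g ≤ 1 := by
  have hbessel {u : (Fin n → ℝ) → ℝ} (hu : Measurable u) (hu1 : ∀ x, |u x| ≤ 1) :
      ∑ i, gM1 n u i ^ 2 ≤ 1 := by
    have hu2 : MemLp u 2 (γ n) := .of_bound hu.aestronglyMeasurable 1 (.of_forall hu1)
    calc ∑ i, gM1 n u i ^ 2 ≤ ∫ x, u x ^ 2 ∂γ n := sum_gM1_sq_le hu2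
      _ ≤ ∫ _, 1 ∂γ n :=
        integral_mono hu2.integrable_sq (integrable_const _)
          fun x => (sq_le_one_iff_abs_le_one _).2 (hu1 x)
      _ = 1 := by simp
  calc gM1pair n f g ≤ ∑ i, (gM1 n f i ^ 2 + gM1 n g i ^ 2) / 2 :=
        Finset.sum_le_sum fun i _ => by linarith [two_mul_le_add_sq (gM1 n f i) (gM1 n g i)]
    _ = (∑ i, gM1 n f i ^ 2 + ∑ i, gM1 n g i ^ 2) / 2 := by
        rw [← Finset.sum_div, Finset.sum_add_distrib]
    _ ≤ 1 := by linarith [hbessel hf hf1, hbessel hg hg1]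

lemma sub_le_mul_gCor (hf : Measurable f) (hg : Measurable g) (hf1 : ∀ x, |f x| ≤ 1)
    (hg1 : ∀ x, |g x| ≤ 1) (hfm : CoordMonotone n f) (hgm : CoordMonotone n g) {W r : ℝ}
    (hW : 0 < W) (hW1 : W ≤ 1) (hr : 0 ≤ r) (hr1 : r ≤ 1 / 2) :
    r * gM1pair n f g / 2 - r ^ 2 * |gM2pair n f g| / 8 - 32 * W * r ^ 3 ≤
      (1 + 32 * r ^ 2 * -Real.log W) * gCor n f g := by
  obtain ⟨F, hF, hF0, hF1, hFf⟩ := exists_bddDiff_tendsto hf hf1 hfm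
  obtain ⟨G, hG, hG0, hG1, hGg⟩ := exists_bddDiff_tendsto hg hg1 hgm
  have hFm (m : ℕ) : AEStronglyMeasurable (F m) (γ n) := (hF m 0).continuous.aestronglyMeasurable
  have hGm (m : ℕ) : AEStronglyMeasurable (G m) (γ n) := (hG m 0).continuous.aestronglyMeasurable
  have hM₁ := tendsto_gM1pair hFm hF1 hFf hGm hG1 hGg
  have hM₂ := tendsto_gM2pair hFm hF1 hFf hGm hG1 hGg
  refine le_of_tendsto_of_tendsto'
    ((((hM₁.const_mul r).div_const 2).sub ((hM₂.abs.const_mul (r ^ 2)).div_const 8)).sub_const _)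
    ((tendsto_gCor hFm hF1 hFf hGm hG1 hGg).const_mul _) fun m => ?_
  exact sub_le_mul_gCor_of_bddDiff (k := 0) (l := 0) (hF m 4) (hG m 4) (hF0 m) (hG0 m) (hF1 m)
    (hG1 m) hW hW1 hr hr1

end Limit

/-! ### Optimisation over the time parameter -/

section Optimisation

variable {M₁ M₂ K r : ℝ}

lemma mul_div_eight_le_of_forall_sub_le (h0 : 0 < M₁) (h1 : M₁ ≤ 1)
    (h : ∀ W r, 0 < W → W ≤ 1 → 0 ≤ r → r ≤ 1 / 2 →
      r * M₁ / 2 - r ^ 2 * |M₂| / 8 - 32 * W * r ^ 3 ≤ (1 + 32 * r ^ 2 * -Real.log W) * K)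
    (hr : 0 ≤ r) (hrL : r * (16 * √(1 - Real.log M₁)) ≤ 1) (hrM : r * |M₂| ≤ M₁) :
    r * M₁ / 8 ≤ K := by
  have hlog : 0 ≤ -Real.log M₁ := neg_nonneg.2 (Real.log_nonpos h0.le h1)
  have hsq : r ^ 2 * (1 - Real.log M₁) ≤ 1 / 256 := by
    have hpow : (r * (16 * √(1 - Real.log M₁))) ^ 2 ≤ 1 := pow_le_one₀ (by positivity) hrL
    rw [mul_pow, mul_pow, Real.sq_sqrt (by linarith)] at hpow
    linarith
  have hr2 : r ^ 2 ≤ 1 / 256 := by nlinarith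
  have hr16 : r ≤ 1 / 2 := by nlinarith
  have hpos : 0 ≤ r * M₁ := by positivity
  have hcoef : 32 * r ^ 2 * -Real.log M₁ ≤ 1 / 8 := by nlinarith
  have hcoef0 : 0 ≤ 32 * r ^ 2 * -Real.log M₁ := by positivity
  have hM₂ : r ^ 2 * |M₂| ≤ r * M₁ := by nlinarith
  have hcube : 32 * M₁ * r ^ 3 ≤ r * M₁ / 8 := by nlinarith
  have hquarter : r * M₁ / 4 ≤ (1 + 32 * r ^ 2 * -Real.log M₁) * K := by
    linarith [h M₁ r h0 h1 hr hr16]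
  have hK : 0 ≤ K := nonneg_of_mul_nonneg_right (by linarith) (by linarith :
    0 < 1 + 32 * r ^ 2 * -Real.log M₁)
  nlinarith [mul_le_mul_of_nonneg_right hcoef hK]

/-- The two admissible values of `r` are `1 / (16 √(log (e / M₁)))` and `M₁ / |M₂|`; the smaller one
satisfies both constraints. -/
lemma min_div_sqrt_log_le_of_forall_sub_le (h0 : 0 ≤ M₁) (h1 : M₁ ≤ 1)
    (h : ∀ W r, 0 < W → W ≤ 1 → 0 ≤ r → r ≤ 1 / 2 →
      r * M₁ / 2 - r ^ 2 * |M₂| / 8 - 32 * W * r ^ 3 ≤ (1 + 32 * r ^ 2 * -Real.log W) * K) :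
    (M₂ = 0 → 1 / 128 * (M₁ / √(Real.log (Real.exp 1 / M₁))) ≤ K) ∧
      (M₂ ≠ 0 →
        1 / 128 * min (M₁ / √(Real.log (Real.exp 1 / M₁))) (M₁ ^ 2 / |M₂|) ≤ K) := by
  rcases h0.eq_or_lt with rfl | hpos
  · have hK : 0 ≤ K := by simpa using h 1 0 one_pos le_rfl le_rfl (by norm_num)
    simpa using hK
  have hlog : Real.log (Real.exp 1 / M₁) = 1 - Real.log M₁ := by
    rw [Real.log_div (Real.exp_ne_zero _) hpos.ne', Real.log_exp]
  have hsqrt : 0 < √(1 - Real.log M₁) := Real.sqrt_pos.2 (by linarith [Real.log_nonpos h0 h1])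
  set s := √(1 - Real.log M₁)
  have hs : 1 / (16 * s) * (16 * s) = 1 := one_div_mul_cancel (by positivity)
  have hgain : 1 / 128 * (M₁ / s) = 1 / (16 * s) * M₁ / 8 := by field_simp; norm_num
  have hlarge (hM₂ : 1 / (16 * s) * |M₂| ≤ M₁) : 1 / 128 * (M₁ / s) ≤ K :=
    hgain.trans_le (mul_div_eight_le_of_forall_sub_le hpos h1 h (by positivity) hs.le hM₂)
  rw [hlog]
  refine ⟨fun hM₂ => hlarge (by simpa [hM₂] using h0), fun hM₂ => ?_⟩
  have habs : 0 < |M₂| := abs_pos.2 hM₂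
  rcases le_total (1 / (16 * s)) (M₁ / |M₂|) with hle | hle
  · calc 1 / 128 * min (M₁ / s) (M₁ ^ 2 / |M₂|) ≤ 1 / 128 * (M₁ / s) := by
          gcongr; exact min_le_left _ _
      _ ≤ K := hlarge ((le_div_iff₀ habs).1 hle)
  · calc 1 / 128 * min (M₁ / s) (M₁ ^ 2 / |M₂|) ≤ 1 / 8 * (M₁ ^ 2 / |M₂|) := by
          gcongr
          · norm_num
          · exact min_le_right _ _
      _ = M₁ / |M₂| * M₁ / 8 := by ring
      _ ≤ K := mul_div_eight_le_of_forall_sub_le hpos h1 h (by positivity)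
          ((mul_le_mul_of_nonneg_right hle (by positivity)).trans hs.le)
          (div_mul_cancel₀ _ habs.ne').le

end Optimisation

/-- **Theorem 1.6.** For increasing measurable `f, g : ℝⁿ → [0,1]`,
`Cor(f,g) ≥ c ⬝ min( M₁(f,g)/√(log(e/M₁(f,g))), M₁(f,g)²/|M₂(f,g)| )`,
the second term being `+∞` when `M₂(f,g) = 0`. -/
theorem gaussian_correlation_second_order :
    ∃ c > (0 : ℝ), ∀ (n : ℕ) (f g : (Fin n → ℝ) → ℝ),
      Measurable f → Measurable g →
      (∀ x, f x ∈ Set.Icc (0 : ℝ) 1) → (∀ x, g x ∈ Set.Icc (0 : ℝ) 1) →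
      CoordMonotone n f → CoordMonotone n g →
      (gM2pair n f g = 0 →
        gCor n f g ≥
          c * (gM1pair n f g / Real.sqrt (Real.log (Real.exp 1 / gM1pair n f g)))) ∧
      (gM2pair n f g ≠ 0 →
        gCor n f g ≥
          c * min (gM1pair n f g / Real.sqrt (Real.log (Real.exp 1 / gM1pair n f g)))
            (gM1pair n f g ^ 2 / |gM2pair n f g|)) := by
  refine ⟨1 / 128, by norm_num, fun n f g hf hg hf01 hg01 hfm hgm => ?_⟩
  have abs_le_one {u : (Fin n → ℝ) → ℝ} (hu : ∀ x, u x ∈ Set.Icc (0 : ℝ) 1) (x : Fin n → ℝ) :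
      |u x| ≤ 1 := (abs_of_nonneg (hu x).1).trans_le (hu x).2
  have hf1 := abs_le_one hf01
  have hg1 := abs_le_one hg01
  have hM₁ : 0 ≤ gM1pair n f g := Finset.sum_nonneg fun i _ =>
    mul_nonneg (gM1_nonneg hf hf1 hfm i) (gM1_nonneg hg hg1 hgm i)
  exact min_div_sqrt_log_le_of_forall_sub_le hM₁ (gM1pair_le_one hf hg hf1 hg1)
    fun _ _ hW hW1 hr hr1 => sub_le_mul_gCor hf hg hf1 hg1 hfm hgm hW hW1 hr hr1

end
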